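/- arXiv:1209.5990 — 7 statements merged into one kernel-verified Lean document; each statement's English description precedes it below -/
import Mathlib

section
/- Let K > 0 and T > 0, and suppose f : (0, T) → ℝ is continuously differentiable with f'(ρ) ≤ −4·f(ρ)^2 − K/4 for all ρ ∈ (0, T), and limsup_{ρ→0⁺} ( f(ρ) − 1/(4ρ) ) ≤ 0. Then T ≤ π/√K. -/
/-!
A solution of `g' ≤ -ω (1 + g ^ 2)` has `(arctan ∘ g)' = g' / (1 + g ^ 2) ≤ -ω`: the angle
`arctan (g x)` decreases at speed at least `ω`. Since it is confined to `(-π / 2, π / 2)`, the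
solution lives on an interval of length at most `π / ω`. The rescaling `g = √(c / d) * f` brings
`f' ≤ -c * f ^ 2 - d` to this form with `ω = √(c * d)`.
-/

open Real Set

section Riccati

variable {D : Set ℝ} {g g' : ℝ → ℝ} {ω : ℝ}

theorem antitoneOn_arctan_add_mul (hD : Convex ℝ D) (hg : ContinuousOn g D)
    (hg' : ∀ x ∈ interior D, HasDerivWithinAt g (g' x) (interior D) x)
    (hle : ∀ x ∈ interior D, g' x ≤ -ω * (1 + g x ^ 2)) :
    AntitoneOn (fun x ↦ arctan (g x) + ω * x) D := by
  refine antitoneOn_of_hasDerivWithinAt_nonpos hD (by fun_prop)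
    (fun x hx ↦ (hg' x hx).arctan.add ((hasDerivWithinAt_id x _).const_mul ω)) fun x hx ↦ ?_
  have angle_speed : 1 / (1 + g x ^ 2) * g' x ≤ -ω := by
    rw [one_div_mul_eq_div, div_le_iff₀ (by positivity)]
    exact hle x hx
  linarith

theorem mul_sub_lt_pi_of_hasDerivWithinAt_le (hD : Convex ℝ D) (hg : ContinuousOn g D)
    (hg' : ∀ x ∈ interior D, HasDerivWithinAt g (g' x) (interior D) x)
    (hle : ∀ x ∈ interior D, g' x ≤ -ω * (1 + g x ^ 2))
    {x y : ℝ} (hx : x ∈ D) (hy : y ∈ D) (hxy : x ≤ y) : ω * (y - x) < π :=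
  calc
    ω * (y - x) ≤ arctan (g x) - arctan (g y) := by
      linarith [antitoneOn_arctan_add_mul hD hg hg' hle hx hy hxy]
    _ < π := by linarith [arctan_lt_pi_div_two (g x), neg_pi_div_two_lt_arctan (g y)]

theorem sub_le_pi_div_of_hasDerivAt_le {a b : ℝ} (hω : 0 < ω)
    (hg : ∀ x ∈ Ioo a b, HasDerivAt g (g' x) x)
    (hle : ∀ x ∈ Ioo a b, g' x ≤ -ω * (1 + g x ^ 2)) : b - a ≤ π / ω := by
  by_contra! hlong
  have hpos : 0 < π / ω := by positivity
  -- The concentric subinterval of length exactly `π / ω` is already too long.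
  have hlt : ω * ((a + b + π / ω) / 2 - (a + b - π / ω) / 2) < π :=
    mul_sub_lt_pi_of_hasDerivWithinAt_le (convex_Ioo a b)
      (fun x hx ↦ (hg x hx).continuousAt.continuousWithinAt)
      (by simpa only [interior_Ioo] using fun x hx ↦ (hg x hx).hasDerivWithinAt)
      (by simpa only [interior_Ioo] using hle)
      ⟨by linarith, by linarith⟩ ⟨by linarith, by linarith⟩ (by linarith)
  have heq : ω * ((a + b + π / ω) / 2 - (a + b - π / ω) / 2) = π := by
    field_simp
    ring
  exact hlt.ne heq

end Riccati

theorem riccati_diameter_estimate_general {a b c d : ℝ} (hc : 0 < c) (hd : 0 < d) {f f' : ℝ → ℝ}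
    (hf : ∀ x ∈ Ioo a b, HasDerivAt f (f' x) x)
    (hle : ∀ x ∈ Ioo a b, f' x ≤ -c * f x ^ 2 - d) : b - a ≤ π / √(c * d) := by
  refine sub_le_pi_div_of_hasDerivAt_le (g := fun x ↦ √(c / d) * f x) (by positivity)
    (fun x hx ↦ (hf x hx).const_mul √(c / d)) fun x hx ↦ ?_
  have sqrt_mul_eq : √(c * d) = √(c / d) * d := by
    rw [show c * d = c / d * d ^ 2 by field_simp, sqrt_mul (by positivity), sqrt_sq hd.le]
  calc
    √(c / d) * f' x ≤ √(c / d) * (-c * f x ^ 2 - d) := by gcongr; exact hle x hx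
    _ = -(√(c / d) * d) * (1 + c / d * f x ^ 2) := by field_simp; ring
    _ = -√(c * d) * (1 + (√(c / d) * f x) ^ 2) := by
      rw [sqrt_mul_eq, mul_pow, sq_sqrt (by positivity)]

/-- ODE form of the diameter estimate: if `f' ≤ -4 f² - K/4` on `(0, T)` with `K > 0` and
`limsup_{ρ→0⁺} (f ρ - 1/(4ρ)) ≤ 0`, then `T ≤ π/√K`. -/
theorem riccati_diameter_estimate (K T : ℝ) (hK : 0 < K) (hT : 0 < T)
    (f f' : ℝ → ℝ)
    (hf : ∀ ρ ∈ Set.Ioo 0 T, HasDerivAt f (f' ρ) ρ)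
    (hf' : ContinuousOn f' (Set.Ioo 0 T))
    (hineq : ∀ ρ ∈ Set.Ioo 0 T, f' ρ ≤ -4 * (f ρ) ^ 2 - K / 4)
    (hlim : Filter.limsup (fun ρ => f ρ - 1 / (4 * ρ)) (nhdsWithin 0 (Set.Ioi 0)) ≤ 0) :
    T ≤ Real.pi / Real.sqrt K := by
  simpa only [sub_zero, mul_div_cancel₀ K four_ne_zero] using
    riccati_diameter_estimate_general four_pos (by positivity : 0 < K / 4) hf hineq
end

section
/- Positivity preservation for linear matrix differential inequalities: Let n ≥ 1, let a ≤ b be real numbers, let W : [a, b] → M_n(ℂ) be continuously differentiable with W(ρ) Hermitian for every ρ, and let B : [a, b] → M_n(ℂ) be continuous. If W(a) is positive semidefinite and W'(ρ) + B(ρ)·W(ρ) + W(ρ)·B(ρ)* is positive semidefinite for every ρ ∈ [a, b], then W(ρ) is positive semidefinite for every ρ ∈ [a, b]. -/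
open Matrix ComplexOrder

/-!
For continuous `B` some `K + B + Bᴴ` is positive semidefinite on all of `[a, b]`, and then for
`ε > 0` the perturbation `V t = W t + ε e^{(K + 1)(t - a)} 1` satisfies the differential inequality
strictly. It stays positive definite: at the first time `t₀` at which `V` is singular there is
`x ≠ 0` with `V t₀ x = 0`, so the terms with `B` vanish at `x` and `x* V' x > 0` at `t₀`, while
`x* V x` reaches its minimum over `[a, t₀]` at `t₀`. Letting `ε → 0` gives the claim for `W`.
-/

open Set Filter Topology

section Topology

variable {n 𝕜 : Type*} [RCLike 𝕜]

theorem posDef_iff_forall_mem_sphere [Fintype n] {A : Matrix n n 𝕜} (hA : A.IsHermitian) :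
    A.PosDef ↔ ∀ x ∈ Metric.sphere (0 : n → 𝕜) 1, 0 < RCLike.re (star x ⬝ᵥ (A *ᵥ x)) := by
  refine ⟨fun h x hx ↦ h.re_dotProduct_pos (ne_zero_of_mem_unit_sphere ⟨x, hx⟩), fun h ↦ ?_⟩
  refine .of_dotProduct_mulVec_pos hA fun x hx ↦ ?_
  have hre : 0 < RCLike.re (star x ⬝ᵥ (A *ᵥ x)) := by
    have hunit := h (((‖x‖⁻¹ : ℝ) : 𝕜) • x) (by simp [norm_smul, hx])
    rw [mulVec_smul, star_smul, smul_dotProduct, dotProduct_smul, smul_smul, smul_eq_mul,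
      RCLike.star_def, RCLike.conj_ofReal, ← RCLike.ofReal_mul, RCLike.re_ofReal_mul] at hunit
    exact pos_of_mul_pos_right hunit (by positivity)
  exact RCLike.pos_iff.2 ⟨hre, hA.im_star_dotProduct_mulVec_self x⟩

theorem isClosed_setOf_isHermitian {R : Type*} [TopologicalSpace R] [T2Space R] [Star R]
    [ContinuousStar R] : IsClosed {A : Matrix n n R | A.IsHermitian} :=
  isClosed_eq continuous_id.matrix_conjTranspose continuous_id

theorem isClosed_setOf_posSemidef [Finite n] :
    IsClosed {A : Matrix n n 𝕜 | A.PosSemidef} := by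
  cases nonempty_fintype n
  simp only [posSemidef_iff_dotProduct_mulVec, ofPred_and, ofPred_forall]
  refine isClosed_setOf_isHermitian.inter (isClosed_iInter fun x ↦ ?_)
  exact isClosed_le continuous_const (by fun_prop)

theorem isClosed_setOf_isHermitian_and_not_posDef [Finite n] :
    IsClosed {A : Matrix n n 𝕜 | A.IsHermitian ∧ ¬ A.PosDef} := by
  cases nonempty_fintype n
  have hopen : IsOpen {A : Matrix n n 𝕜 |
      ∀ x ∈ Metric.sphere (0 : n → 𝕜) 1, 0 < RCLike.re (star x ⬝ᵥ (A *ᵥ x))} := by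
    refine isOpen_iff_mem_nhds.2 fun A hA ↦ ?_
    refine (isCompact_sphere 0 1).eventually_forall_of_forall_eventually fun x hx ↦ ?_
    have hcont : Continuous fun p : Matrix n n 𝕜 × (n → 𝕜) ↦
        RCLike.re (star p.2 ⬝ᵥ (p.1 *ᵥ p.2)) := by fun_prop
    exact hcont.continuousAt.eventually (lt_mem_nhds (hA x hx))
  convert isClosed_setOf_isHermitian.inter hopen.isClosed_compl using 1
  ext A
  exact and_congr_right fun hA ↦ not_congr (posDef_iff_forall_mem_sphere hA)

open scoped MatrixOrder Matrix.Norms.L2Operator in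
theorem exists_forall_posSemidef_smul_one_add [Finite n] [DecidableEq n] {X : Type*}
    [TopologicalSpace X] {s : Set X} (hs : IsCompact s) {H : X → Matrix n n ℂ}
    (hH : ContinuousOn H s) (hHerm : ∀ t ∈ s, (H t).IsHermitian) :
    ∃ K : ℝ, ∀ t ∈ s, (K • (1 : Matrix n n ℂ) + H t).PosSemidef := by
  cases nonempty_fintype n
  obtain ⟨K, hK⟩ := hs.exists_bound_of_continuousOn hH
  refine ⟨K, fun t ht ↦ nonneg_iff_posSemidef.1 ?_⟩
  have hle : -(‖H t‖ • 1) ≤ H t := by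
    simpa only [Algebra.algebraMap_eq_smul_one] using
      IsSelfAdjoint.neg_algebraMap_norm_le_self (hHerm t ht).isSelfAdjoint
  calc 0 ≤ ‖H t‖ • (1 : Matrix n n ℂ) + H t := neg_le_iff_add_nonneg'.1 hle
    _ ≤ K • (1 : Matrix n n ℂ) + H t := by gcongr; exact hK t ht

end Topology

theorem hasDerivWithinAt_Icc_nonpos_of_isMinOn {f : ℝ → ℝ} {f' a b : ℝ} (hab : a < b)
    (hf : HasDerivWithinAt f f' (Icc a b) b) (hmin : IsMinOn f (Icc a b) b) : f' ≤ 0 := by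
  have hcone : a - b ∈ posTangentConeAt (Icc a b) b :=
    sub_mem_posTangentConeAt_of_segment_subset (by rw [segment_symm, segment_eq_Icc hab.le])
  have hnonneg : 0 ≤ (a - b) * f' := by
    simpa using hmin.localize.hasFDerivWithinAt_nonneg hf.hasFDerivWithinAt hcone
  exact nonpos_of_mul_nonneg_right hnonneg (sub_neg.2 hab)

section DifferentialInequality

variable {n 𝕜 : Type*} [Fintype n] [RCLike 𝕜] {a b : ℝ}

theorem hasDerivWithinAt_re_dotProduct_mulVec {V : ℝ → Matrix n n 𝕜} {V' : Matrix n n 𝕜}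
    {s : Set ℝ} {t : ℝ} (hV : ∀ i j, HasDerivWithinAt (fun τ ↦ V τ i j) (V' i j) s t)
    (x y : n → 𝕜) :
    HasDerivWithinAt (fun τ ↦ RCLike.re (x ⬝ᵥ (V τ *ᵥ y))) (RCLike.re (x ⬝ᵥ (V' *ᵥ y))) s t := by
  have hform : HasDerivWithinAt (fun τ ↦ x ⬝ᵥ (V τ *ᵥ y)) (x ⬝ᵥ (V' *ᵥ y)) s t :=
    .fun_sum fun i _ ↦ .const_mul _ <| .fun_sum fun j _ ↦ (hV i j).mul_const _
  exact (RCLike.reCLM (K := 𝕜)).hasFDerivAt.comp_hasDerivWithinAt t hform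

theorem exists_first_singular_of_not_posDef {V : ℝ → Matrix n n 𝕜}
    (hV : ContinuousOn V (Icc a b)) (hHerm : ∀ t ∈ Icc a b, (V t).IsHermitian)
    (hVa : (V a).PosDef) {t₁ : ℝ} (ht₁ : t₁ ∈ Icc a b) (hneg : ¬ (V t₁).PosDef) :
    ∃ t₀ ∈ Ioc a b, (∀ t ∈ Ico a t₀, (V t).PosDef) ∧ ∃ x, x ≠ 0 ∧ V t₀ *ᵥ x = 0 := by
  classical
  have hclosed := hV.preimage_isClosed_of_isClosed isClosed_Icc
    isClosed_setOf_isHermitian_and_not_posDef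
  obtain ⟨t₀, ⟨ht₀, -, hnot⟩, hleast⟩ :=
    (isCompact_Icc.of_isClosed_subset hclosed inter_subset_left).exists_isLeast
      ⟨t₁, ht₁, hHerm t₁ ht₁, hneg⟩
  have hat₀ : a < t₀ := ht₀.1.lt_of_ne (by rintro rfl; exact hnot hVa)
  have hsub : Ico a t₀ ⊆ Icc a b := fun t ht ↦ ⟨ht.1, ht.2.le.trans ht₀.2⟩
  have hbefore : ∀ t ∈ Ico a t₀, (V t).PosDef := fun t ht ↦ by
    by_contra h
    exact ht.2.not_ge (hleast ⟨hsub ht, hHerm t (hsub ht), h⟩)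
  have hpsd : (V t₀).PosSemidef := by
    have hmem : t₀ ∈ closure (Ico a t₀) := by
      rw [closure_Ico hat₀.ne]; exact right_mem_Icc.2 hat₀.le
    exact isClosed_setOf_posSemidef.closure_subset <|
      ((hV t₀ ht₀).mono hsub).mem_closure hmem fun t ht ↦ (hbefore t ht).posSemidef
  have hdet : (V t₀).det = 0 := not_not.1 fun h ↦ hnot (hpsd.posDef_iff_det_ne_zero.2 h)
  exact ⟨t₀, ⟨hat₀, ht₀.2⟩, hbefore, exists_mulVec_eq_zero_iff.2 hdet⟩

theorem star_dotProduct_add_mul_add_mul_conjTranspose_mulVec {R : Type*} [NonUnitalSemiring R]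
    [StarRing R] {A : Matrix n n R} (hA : A.IsHermitian) {x : n → R} (hx : A *ᵥ x = 0)
    (M B : Matrix n n R) :
    star x ⬝ᵥ ((M + B * A + A * Bᴴ) *ᵥ x) = star x ⬝ᵥ (M *ᵥ x) := by
  have hx' : star x ᵥ* A = 0 := by simpa [star_mulVec, hA.eq] using congrArg star hx
  simp only [add_mulVec, ← mulVec_mulVec, hx, mulVec_zero, dotProduct_add,
    dotProduct_mulVec (star x) A, hx', zero_dotProduct, add_zero]

theorem posDef_preserved_linear_matrix_ODE {V V' B : ℝ → Matrix n n 𝕜}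
    (hV : ∀ t ∈ Icc a b, ∀ i j,
      HasDerivWithinAt (fun τ ↦ V τ i j) (V' t i j) (Icc a b) t)
    (hHerm : ∀ t ∈ Icc a b, (V t).IsHermitian) (hVa : (V a).PosDef)
    (hineq : ∀ t ∈ Icc a b, (V' t + B t * V t + V t * (B t)ᴴ).PosDef) :
    ∀ t ∈ Icc a b, (V t).PosDef := by
  intro t₁ ht₁
  by_contra hneg
  have hcont : ContinuousOn V (Icc a b) :=
    continuousOn_pi.2 fun i ↦ continuousOn_pi.2 fun j t ht ↦ (hV t ht i j).continuousWithinAt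
  obtain ⟨t₀, ⟨hat₀, ht₀b⟩, hbefore, x, hx, hVx⟩ :=
    exists_first_singular_of_not_posDef hcont hHerm hVa ht₁ hneg
  have ht₀ : t₀ ∈ Icc a b := ⟨hat₀.le, ht₀b⟩
  have hpos : 0 < RCLike.re (star x ⬝ᵥ (V' t₀ *ᵥ x)) := by
    rw [← star_dotProduct_add_mul_add_mul_conjTranspose_mulVec (hHerm t₀ ht₀) hVx _ (B t₀)]
    exact (hineq t₀ ht₀).re_dotProduct_pos hx
  have hmin : IsMinOn (fun t ↦ RCLike.re (star x ⬝ᵥ (V t *ᵥ x))) (Icc a t₀) t₀ := by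
    intro t ht
    rcases ht.2.eq_or_lt with rfl | hlt
    · exact le_refl (RCLike.re _)
    · simpa [hVx] using (hbefore t ⟨ht.1, hlt⟩).posSemidef.re_dotProduct_nonneg x
  have hderiv := (hasDerivWithinAt_re_dotProduct_mulVec (hV t₀ ht₀) (star x) x).mono
    (Icc_subset_Icc_right ht₀b)
  exact (hasDerivWithinAt_Icc_nonpos_of_isMinOn hat₀ hderiv hmin).not_gt hpos

variable [DecidableEq n] {W W' B : ℝ → Matrix n n 𝕜} {K : ℝ}

theorem posDef_add_exp_smul_one_of_posSemidef
    (hW : ∀ t ∈ Icc a b, ∀ i j,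
      HasDerivWithinAt (fun τ ↦ W τ i j) (W' t i j) (Icc a b) t)
    (hHerm : ∀ t ∈ Icc a b, (W t).IsHermitian)
    (hB : ∀ t ∈ Icc a b, (K • (1 : Matrix n n 𝕜) + (B t + (B t)ᴴ)).PosSemidef)
    (hWa : (W a).PosSemidef)
    (hineq : ∀ t ∈ Icc a b, (W' t + B t * W t + W t * (B t)ᴴ).PosSemidef)
    {ε : ℝ} (hε : 0 < ε) :
    ∀ t ∈ Icc a b,
      (W t + (ε * Real.exp ((K + 1) * (t - a))) • (1 : Matrix n n 𝕜)).PosDef := by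
  set c : ℝ → ℝ := fun t ↦ ε * Real.exp ((K + 1) * (t - a))
  have hc : ∀ t, 0 < c t := fun t ↦ mul_pos hε (Real.exp_pos _)
  have hc' : ∀ t, HasDerivAt c ((K + 1) * c t) t := fun t ↦ by
    refine ((((hasDerivAt_id t).sub_const a).const_mul (K + 1)).exp.const_mul ε).congr_deriv ?_
    simp only [c, id]; ring
  refine posDef_preserved_linear_matrix_ODE
    (V' := fun t ↦ W' t + ((K + 1) * c t) • (1 : Matrix n n 𝕜)) (B := B)
    (fun t ht i j ↦ ?_) (fun t ht ↦ ?_) ?_ fun t ht ↦ ?_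
  · exact (hW t ht i j).add ((hc' t).hasDerivWithinAt.smul_const _)
  · exact (hHerm t ht).add (PosDef.one.smul (hc t)).isHermitian
  · exact .posSemidef_add hWa (PosDef.one.smul (hc a))
  · have hsplit : W' t + ((K + 1) * c t) • (1 : Matrix n n 𝕜) + B t * (W t + c t • 1) +
        (W t + c t • 1) * (B t)ᴴ = (W' t + B t * W t + W t * (B t)ᴴ) +
          c t • ((K • (1 : Matrix n n 𝕜) + (B t + (B t)ᴴ)) + 1) := by
      simp only [mul_add, add_mul, mul_smul_comm, smul_mul_assoc, mul_one, one_mul]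
      module
    rw [hsplit]
    exact .posSemidef_add (hineq t ht) ((PosDef.posSemidef_add (hB t ht) PosDef.one).smul (hc t))

theorem posSemidef_preserved_linear_matrix_ODE_general
    (hW : ∀ t ∈ Icc a b, ∀ i j,
      HasDerivWithinAt (fun τ ↦ W τ i j) (W' t i j) (Icc a b) t)
    (hHerm : ∀ t ∈ Icc a b, (W t).IsHermitian)
    (hB : ∀ t ∈ Icc a b, (K • (1 : Matrix n n 𝕜) + (B t + (B t)ᴴ)).PosSemidef)
    (hWa : (W a).PosSemidef)
    (hineq : ∀ t ∈ Icc a b, (W' t + B t * W t + W t * (B t)ᴴ).PosSemidef) :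
    ∀ t ∈ Icc a b, (W t).PosSemidef := by
  intro t ht
  have hlim : Tendsto (fun ε : ℝ ↦ W t + (ε * Real.exp ((K + 1) * (t - a))) • (1 : Matrix n n 𝕜))
      (𝓝[>] 0) (𝓝 (W t)) := by
    refine Tendsto.mono_left ?_ nhdsWithin_le_nhds
    exact Continuous.tendsto' (by fun_prop) _ _ (by simp)
  refine isClosed_setOf_posSemidef.mem_of_tendsto hlim ?_
  filter_upwards [self_mem_nhdsWithin] with ε hε
  exact (posDef_add_exp_smul_one_of_posSemidef hW hHerm hB hWa hineq hε t ht).posSemidef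

end DifferentialInequality

/-- Positivity preservation for linear matrix differential inequalities: if `W` is a `C¹`
Hermitian-matrix-valued function on `[a, b]` with `W a` positive semidefinite and
`W' + B·W + W·Bᴴ` positive semidefinite on `[a, b]` for a continuous `B`, then `W ρ` is
positive semidefinite for every `ρ ∈ [a, b]`. -/
theorem posSemidef_preserved_linear_matrix_ODE (n : ℕ) (hn : 1 ≤ n)
    (a b : ℝ) (hab : a ≤ b)
    (W W' B : ℝ → Matrix (Fin n) (Fin n) ℂ)
    (hW : ∀ ρ ∈ Set.Icc a b, ∀ i j,
      HasDerivWithinAt (fun t => W t i j) (W' ρ i j) (Set.Icc a b) ρ)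
    (hW' : ∀ i j, ContinuousOn (fun ρ => W' ρ i j) (Set.Icc a b))
    (hHerm : ∀ ρ ∈ Set.Icc a b, (W ρ).IsHermitian)
    (hB : ∀ i j, ContinuousOn (fun ρ => B ρ i j) (Set.Icc a b))
    (hWa : (W a).PosSemidef)
    (hineq : ∀ ρ ∈ Set.Icc a b, (W' ρ + B ρ * W ρ + W ρ * (B ρ)ᴴ).PosSemidef) :
    ∀ ρ ∈ Set.Icc a b, (W ρ).PosSemidef := by
  have hBc : ContinuousOn B (Set.Icc a b) :=
    continuousOn_pi.2 fun i ↦ continuousOn_pi.2 fun j ↦ hB i j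
  obtain ⟨K, hK⟩ := exists_forall_posSemidef_smul_one_add isCompact_Icc (hBc.add hBc.star)
    fun t _ ↦ isHermitian_add_transpose_self (B t)
  exact posSemidef_preserved_linear_matrix_ODE_general hW hHerm hK hWa hineq
end

section
/- Matrix Riccati comparison: Let n ≥ 1, T > 0, let X, Y : (0, T] → M_n(ℂ) be continuously differentiable with X(ρ), Y(ρ) Hermitian for every ρ, and let A : (0, T] → M_n(ℂ) be continuous. Assume that ( Y'(ρ) + Y(ρ)² + A(ρ)Y(ρ) + Y(ρ)A(ρ)* ) − ( X'(ρ) + X(ρ)² + A(ρ)X(ρ) + X(ρ)A(ρ)* ) is positive semidefinite for all ρ ∈ (0, T], and that there exists ρ₀ ∈ (0, T] with Y(ρ) − X(ρ) positive semidefinite for all ρ ∈ (0, ρ₀]. Then Y(ρ) − X(ρ) is positive semidefinite for all ρ ∈ (0, T]. -/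
open Matrix ComplexOrder

/-!
Put `Z = Y - X` and `B = A + (X + Y) / 2`. Since `X` and `Y` are self-adjoint, the quadratic terms
are absorbed into `B` and the hypothesis becomes the linear inequality `P := Z' + BZ + ZB* ≥ 0`.
To first order in `h` this says `Z(t + h) = (1 - hB) Z(t) (1 - hB)* + hP + o(h)`. Congruences and
nonnegative increments preserve the cone of nonnegative elements, so the distance `d(t)` from `Z(t)`
to that cone satisfies `d(t + h) ≤ (1 + h‖B‖)² d(t) + o(h)`, and `d` vanishes by Grönwall's
inequality as soon as it vanishes initially.
-/

lemma riccati_sub_riccati {R : Type*} [Ring R] [StarRing R] [Algebra ℝ R] [StarModule ℝ R]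
    {X Y : R} (hX : IsSelfAdjoint X) (hY : IsSelfAdjoint Y) (A : R) :
    (Y ^ 2 + A * Y + Y * star A) - (X ^ 2 + A * X + X * star A)
      = (A + (1 / 2 : ℝ) • (X + Y)) * (Y - X) + (Y - X) * star (A + (1 / 2 : ℝ) • (X + Y)) := by
  have hsymm : (1 / 2 : ℝ) • ((X + Y) * (Y - X) + (Y - X) * (X + Y)) = Y ^ 2 - X ^ 2 := by
    have : (X + Y) * (Y - X) + (Y - X) * (X + Y) = (2 : ℝ) • (Y ^ 2 - X ^ 2) := by
      rw [two_smul]; noncomm_ring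
    rw [this, smul_smul]; norm_num
  have hstar : star (A + (1 / 2 : ℝ) • (X + Y)) = star A + (1 / 2 : ℝ) • (X + Y) := by
    rw [star_add, ((IsSelfAdjoint.all (1 / 2 : ℝ)).smul (hX.add hY)).star_eq]
  calc (Y ^ 2 + A * Y + Y * star A) - (X ^ 2 + A * X + X * star A)
      = A * (Y - X) + (Y - X) * star A + (Y ^ 2 - X ^ 2) := by noncomm_ring
    _ = A * (Y - X) + (Y - X) * star A
        + (1 / 2 : ℝ) • ((X + Y) * (Y - X) + (Y - X) * (X + Y)) := by rw [hsymm]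
    _ = (A + (1 / 2 : ℝ) • (X + Y)) * (Y - X) + (Y - X) * star (A + (1 / 2 : ℝ) • (X + Y)) := by
      rw [hstar, smul_add, add_mul A, mul_add (Y - X) (star A), smul_mul_assoc, mul_smul_comm]
      abel

section StarOrderedRing

open Set Metric Filter Topology

lemma eventually_slope_lt_of_le_add_norm {E : Type*} [NormedAddCommGroup E] [NormedSpace ℝ E]
    {f u : ℝ → ℝ} {F : ℝ → E} {u' t r : ℝ} (hu : HasDerivWithinAt u u' (Ioi t) t)
    (hF : HasDerivWithinAt F 0 (Ioi t) t) (hut : u t = f t) (hFt : F t = 0)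
    (hf : ∀ s > t, f s ≤ u s + ‖F s‖) (hr : u' < r) :
    ∀ᶠ s in 𝓝[>] t, (s - t)⁻¹ * (f s - f t) < r := by
  rw [hasDerivWithinAt_iff_tendsto_slope' self_notMem_Ioi] at hu hF
  have hlim : Tendsto (fun s => slope u t s + ‖slope F t s‖) (𝓝[>] t) (𝓝 u') := by
    simpa using hu.add hF.norm
  filter_upwards [hlim.eventually_lt_const hr, self_mem_nhdsWithin] with s hs hts
  have hst : 0 < s - t := sub_pos.2 hts
  calc (s - t)⁻¹ * (f s - f t)
      ≤ (s - t)⁻¹ * (u s + ‖F s‖ - u t) := by rw [hut]; gcongr; exact hf s hts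
    _ = slope u t s + ‖slope F t s‖ := by
        simp only [slope, vsub_eq_sub, hFt, sub_zero, norm_smul, norm_inv,
          Real.norm_of_nonneg hst.le, smul_eq_mul]
        ring
    _ < r := hs

variable {R : Type*} [NormedRing R] [StarRing R] [NormedStarGroup R]

lemma norm_one_add_mul_mul_star_le (b x : R) :
    ‖(1 + b) * x * star (1 + b)‖ ≤ (1 + ‖b‖) ^ 2 * ‖x‖ := by
  have hbx : ‖b * x‖ ≤ ‖b‖ * ‖x‖ := norm_mul_le b x
  have hxb : ‖x * star b‖ ≤ ‖x‖ * ‖b‖ := norm_star b ▸ norm_mul_le x (star b)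
  have hbxb : ‖b * (x * star b)‖ ≤ ‖b‖ * (‖x‖ * ‖b‖) := norm_mul_le_of_le le_rfl hxb
  -- Expanding the product avoids `‖1‖`, which need not be `1`.
  calc ‖(1 + b) * x * star (1 + b)‖
      = ‖x + b * x + x * star b + b * (x * star b)‖ := by
        rw [star_add, star_one]; noncomm_ring
    _ ≤ ‖x‖ + ‖b * x‖ + ‖x * star b‖ + ‖b * (x * star b)‖ := norm_add₄_le
    _ ≤ (1 + ‖b‖) ^ 2 * ‖x‖ := by linarith

lemma hasDerivAt_one_add_smul_mul_mul_star_add_smul [NormedAlgebra ℝ R] [StarModule ℝ R]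
    (b x p : R) (t : ℝ) :
    HasDerivAt (fun s => (1 + (t - s) • b) * x * star (1 + (t - s) • b) + (s - t) • p)
      (p - b * x - x * star b) t := by
  have hb : HasDerivAt (fun s : ℝ => 1 + (t - s) • b) (-b) t := by
    simpa using (((hasDerivAt_id t).const_sub t).smul_const b).const_add 1
  have hp : HasDerivAt (fun s : ℝ => (s - t) • p) p t := by
    simpa using ((hasDerivAt_id t).sub_const t).smul_const p
  refine (((hb.mul_const x).mul hb.star).add hp).congr_deriv ?_
  simp only [sub_self, zero_smul, add_zero, one_mul, star_one, mul_one, star_neg, neg_mul, mul_neg]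
  abel

variable [PartialOrder R] [StarOrderedRing R]

lemma infDist_Ici_one_add_mul_mul_star_add_le (b x : R) {p : R} (hp : 0 ≤ p) :
    infDist ((1 + b) * x * star (1 + b) + p) (Ici 0) ≤ (1 + ‖b‖) ^ 2 * infDist x (Ici 0) := by
  have : Nonempty (Ici (0 : R)) := ⟨0, self_mem_Ici⟩
  rw [infDist_eq_iInf (x := x), Real.mul_iInf_of_nonneg (by positivity)]
  refine le_ciInf fun ⟨y, hy⟩ => ?_
  calc infDist ((1 + b) * x * star (1 + b) + p) (Ici 0)
      ≤ dist ((1 + b) * x * star (1 + b) + p) ((1 + b) * y * star (1 + b) + p) :=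
        infDist_le_dist_of_mem (add_nonneg (star_right_conjugate_nonneg hy _) hp)
    _ = ‖(1 + b) * (x - y) * star (1 + b)‖ := by
        rw [dist_add_right, dist_eq_norm, mul_sub, sub_mul]
    _ ≤ (1 + ‖b‖) ^ 2 * dist x y := by
        rw [dist_eq_norm]; exact norm_one_add_mul_mul_star_le b (x - y)

variable [NormedAlgebra ℝ R] [StarModule ℝ R]

lemma eventually_slope_infDist_Ici_lt {Z : ℝ → R} {Z' B : R} {t r : ℝ}
    (hZ : HasDerivWithinAt Z Z' (Ici t) t) (hZ' : 0 ≤ Z' + B * Z t + Z t * star B)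
    (hr : 2 * ‖B‖ * infDist (Z t) (Ici 0) < r) :
    ∀ᶠ s in 𝓝[>] t, (s - t)⁻¹ * (infDist (Z s) (Ici 0) - infDist (Z t) (Ici 0)) < r := by
  set P := Z' + B * Z t + Z t * star B with hP
  set G : ℝ → R := fun s =>
    (1 + (t - s) • B) * Z t * star (1 + (t - s) • B) + (s - t) • P with hG
  set u : ℝ → ℝ := fun s => (1 + (s - t) * ‖B‖) ^ 2 * infDist (Z t) (Ici 0) with hu
  have hZG : HasDerivWithinAt (Z - G) 0 (Ioi t) t := by
    refine (hZ.Ioi_of_Ici.sub (hasDerivAt_one_add_smul_mul_mul_star_add_smul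
      B (Z t) P t).hasDerivWithinAt).congr_deriv ?_
    rw [hP]
    abel
  have hu' : HasDerivWithinAt u (2 * ‖B‖ * infDist (Z t) (Ici 0)) (Ioi t) t := by
    have := (((((hasDerivAt_id t).sub_const t).mul_const ‖B‖).const_add 1).pow 2).mul_const
      (infDist (Z t) (Ici 0))
    simpa using this.hasDerivWithinAt
  refine eventually_slope_lt_of_le_add_norm hu' hZG (by simp [hu]) (by simp [hG])
    (fun s hts => ?_) hr
  have hnorm : ‖(t - s) • B‖ = (s - t) * ‖B‖ := by
    rw [norm_smul, Real.norm_eq_abs, abs_sub_comm, abs_of_pos (sub_pos.2 hts)]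
  calc infDist (Z s) (Ici 0)
      ≤ infDist (G s) (Ici 0) + dist (Z s) (G s) := infDist_le_infDist_add_dist
    _ ≤ u s + ‖(Z - G) s‖ := by
        rw [dist_eq_norm]
        gcongr
        · simpa only [hnorm] using infDist_Ici_one_add_mul_mul_star_add_le
            ((t - s) • B) (Z t) (smul_nonneg (sub_pos.2 hts).le hZ')
        · rfl

variable [ClosedIciTopology R]

theorem nonneg_of_lyapunov_nonneg {a b K : ℝ} {Z Z' B : ℝ → R} (hZ : ContinuousOn Z (Icc a b))
    (hZ' : ∀ t ∈ Ico a b, HasDerivWithinAt Z (Z' t) (Ici t) t) (hB : ∀ t ∈ Ico a b, ‖B t‖ ≤ K)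
    (hP : ∀ t ∈ Ico a b, 0 ≤ Z' t + B t * Z t + Z t * star (B t)) (ha : 0 ≤ Z a) :
    ∀ t ∈ Icc a b, 0 ≤ Z t := by
  have hcone (z : R) : 0 ≤ z ↔ infDist z (Ici 0) = 0 :=
    isClosed_Ici.mem_iff_infDist_zero nonempty_Ici
  intro t ht
  have hgronwall : infDist (Z t) (Ici 0) ≤ gronwallBound 0 (2 * K) 0 (t - a) :=
    le_gronwallBound_of_liminf_deriv_right_le
      ((continuous_infDist_pt (Ici 0)).comp_continuousOn hZ)
      (fun s hs _ hr => (eventually_slope_infDist_Ici_lt (hZ' s hs) (hP s hs) hr).frequently)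
      ((hcone _).1 ha).le
      (fun s hs => by
        rw [add_zero]
        exact mul_le_mul_of_nonneg_right (by linarith [hB s hs]) infDist_nonneg)
      t ht
  rw [gronwallBound_ε0_δ0] at hgronwall
  exact (hcone _).2 (hgronwall.antisymm infDist_nonneg)

theorem matrix_riccati_comparison_general {s : Set ℝ} (hs : s.OrdConnected)
    {X X' Y Y' A : ℝ → R}
    (hX : ∀ t ∈ s, HasDerivWithinAt X (X' t) s t) (hY : ∀ t ∈ s, HasDerivWithinAt Y (Y' t) s t)
    (hXs : ∀ t ∈ s, IsSelfAdjoint (X t)) (hYs : ∀ t ∈ s, IsSelfAdjoint (Y t))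
    (hA : ContinuousOn A s)
    (hineq : ∀ t ∈ s, X' t + X t ^ 2 + A t * X t + X t * star (A t)
      ≤ Y' t + Y t ^ 2 + A t * Y t + Y t * star (A t))
    (hinit : ∃ a ∈ s, ∀ t ∈ s, t ≤ a → X t ≤ Y t) :
    ∀ t ∈ s, X t ≤ Y t := by
  intro t ht
  obtain ⟨a, ha, hinit⟩ := hinit
  rcases le_total t a with hta | hat
  · exact hinit t ht hta
  have hsub : Icc a t ⊆ s := hs.out ha ht
  have hsub' : Ico a t ⊆ s := Ico_subset_Icc_self.trans hsub
  set B : ℝ → R := fun r => A r + (1 / 2 : ℝ) • (X r + Y r)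
  have hB : ContinuousOn B (Icc a t) :=
    (hA.add (((HasDerivWithinAt.continuousOn hX).add
      (HasDerivWithinAt.continuousOn hY)).const_smul _)).mono hsub
  obtain ⟨K, hK⟩ := isCompact_Icc.exists_bound_of_continuousOn hB
  have hZ (r) (hr : r ∈ s) : HasDerivWithinAt (Y - X) (Y' r - X' r) s r := (hY r hr).sub (hX r hr)
  have hP (r) (hr : r ∈ s) :
      0 ≤ (Y' r - X' r) + B r * (Y - X) r + (Y - X) r * star (B r) := by
    calc 0 ≤ (Y' r + Y r ^ 2 + A r * Y r + Y r * star (A r))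
          - (X' r + X r ^ 2 + A r * X r + X r * star (A r)) := sub_nonneg.2 (hineq r hr)
      _ = (Y' r - X' r) + ((Y r ^ 2 + A r * Y r + Y r * star (A r))
          - (X r ^ 2 + A r * X r + X r * star (A r))) := by abel
      _ = _ := by rw [riccati_sub_riccati (hXs r hr) (hYs r hr), ← add_assoc]; rfl
  have hnonneg := nonneg_of_lyapunov_nonneg
    ((HasDerivWithinAt.continuousOn hZ).mono hsub)
    (fun r hr => ((hZ r (hsub' hr)).mono hsub).mono_of_mem_nhdsWithin (Icc_mem_nhdsGE_of_mem hr))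
    (fun r hr => hK r (Ico_subset_Icc_self hr)) (fun r hr => hP r (hsub' hr))
    (sub_nonneg.2 (hinit a ha le_rfl))
  exact sub_nonneg.1 (hnonneg t (right_mem_Icc.2 hat))

end StarOrderedRing

/-- Matrix Riccati comparison: if
`Y' + Y² + AY + YAᴴ - (X' + X² + AX + XAᴴ)` is positive semidefinite on `(0, T]` for `C¹`
Hermitian-matrix-valued `X, Y` and continuous `A`, and `Y - X` is positive semidefinite
near `0`, then `Y - X` is positive semidefinite on all of `(0, T]`. -/
theorem matrix_riccati_comparison (n : ℕ) (hn : 1 ≤ n) (T : ℝ) (hT : 0 < T)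
    (X X' Y Y' A : ℝ → Matrix (Fin n) (Fin n) ℂ)
    (hX : ∀ ρ ∈ Set.Ioc 0 T, ∀ i j,
      HasDerivWithinAt (fun t => X t i j) (X' ρ i j) (Set.Ioc 0 T) ρ)
    (hX' : ∀ i j, ContinuousOn (fun ρ => X' ρ i j) (Set.Ioc 0 T))
    (hY : ∀ ρ ∈ Set.Ioc 0 T, ∀ i j,
      HasDerivWithinAt (fun t => Y t i j) (Y' ρ i j) (Set.Ioc 0 T) ρ)
    (hY' : ∀ i j, ContinuousOn (fun ρ => Y' ρ i j) (Set.Ioc 0 T))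
    (hHermX : ∀ ρ ∈ Set.Ioc 0 T, (X ρ).IsHermitian)
    (hHermY : ∀ ρ ∈ Set.Ioc 0 T, (Y ρ).IsHermitian)
    (hA : ∀ i j, ContinuousOn (fun ρ => A ρ i j) (Set.Ioc 0 T))
    (hineq : ∀ ρ ∈ Set.Ioc 0 T,
      ((Y' ρ + Y ρ ^ 2 + A ρ * Y ρ + Y ρ * (A ρ)ᴴ)
        - (X' ρ + X ρ ^ 2 + A ρ * X ρ + X ρ * (A ρ)ᴴ)).PosSemidef)
    (hinit : ∃ ρ₀ ∈ Set.Ioc 0 T, ∀ ρ ∈ Set.Ioc 0 ρ₀, (Y ρ - X ρ).PosSemidef) :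
    ∀ ρ ∈ Set.Ioc 0 T, (Y ρ - X ρ).PosSemidef := by
  open scoped MatrixOrder Matrix.Norms.L2Operator in
  simp only [← Matrix.le_iff] at hineq hinit ⊢
  exact matrix_riccati_comparison_general Set.ordConnected_Ioc
    (fun ρ hρ => hasDerivWithinAt_pi.2 fun i => hasDerivWithinAt_pi.2 (hX ρ hρ i))
    (fun ρ hρ => hasDerivWithinAt_pi.2 fun i => hasDerivWithinAt_pi.2 (hY ρ hρ i))
    (fun ρ hρ => (hHermX ρ hρ).isSelfAdjoint) (fun ρ hρ => (hHermY ρ hρ).isSelfAdjoint)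
    (continuousOn_pi.2 fun i => continuousOn_pi.2 (hA i)) hineq
    (hinit.imp fun a ha => ⟨ha.1, fun ρ hρ hρa => ha.2 ρ ⟨hρ.1, hρa⟩⟩)
end

section
/- Matrix Riccati comparison with a rank-one quadratic term: Let n ≥ 1, T > 0, and let X, Y : (0, T] → M_n(ℂ) be continuously differentiable with X(ρ), Y(ρ) Hermitian for every ρ. Let e₁ ∈ ℂⁿ be the first standard basis vector. Assume that ( Y'(ρ) + Y(ρ)² + (Y(ρ)e₁)(Y(ρ)e₁)* ) − ( X'(ρ) + X(ρ)² + (X(ρ)e₁)(X(ρ)e₁)* ) is positive semidefinite for all ρ ∈ (0, T], and that there exists ρ₀ ∈ (0, T] with Y(ρ) − X(ρ) positive semidefinite for all ρ ∈ (0, ρ₀]. Then Y(ρ) − X(ρ) is positive semidefinite for all ρ ∈ (0, T]. -/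
open Matrix ComplexOrder

/-!
For Hermitian `X` one has `X² + (Xe₁)(Xe₁)* = XQX` with `Q = 1 + e₁e₁*`, so the hypothesis compares
`X' + XQX` with `Y' + YQY`. With `D = Y - X` and `A = (X + Y)Q / 2`, the difference of the
quadratic terms is `AD + DA*`, so `D` satisfies the linear inequality `D' + AD + DA* ≥ 0`.

Such an inequality preserves the cone of nonnegative elements: if `P ≥ 0` denotes its left-hand
side at time `t`, then `D(t + h) = (1 - hA) D(t) (1 - hA)* + hP + o(h)`, and congruence by `1 - hA`
followed by adding `hP` maps the cone to itself and is Lipschitz with constant `(1 + h‖A‖)²`. Hence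
the distance `d` from `D` to the cone satisfies `d' ≤ 2‖A‖d` in the sense of upper right
derivatives, and Grönwall's inequality keeps `d` equal to zero.
-/

open Set Filter Topology Metric

theorem infDist_le_mul_infDist_of_mapsTo {α β : Type*} [PseudoMetricSpace α] [PseudoMetricSpace β]
    {φ : α → β} {s : Set α} {t : Set β} {K : ℝ} {x : α} (hK : 0 ≤ K)
    (hφ : ∀ y ∈ s, dist (φ x) (φ y) ≤ K * dist x y) (hst : MapsTo φ s t) (hs : s.Nonempty) :
    infDist (φ x) t ≤ K * infDist x s := by
  have : Nonempty s := hs.to_subtype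
  rw [infDist_eq_iInf (s := s), Real.mul_iInf_of_nonneg hK]
  exact le_ciInf fun y => (infDist_le_dist_of_mem (hst y.2)).trans (hφ y y.2)

theorem norm_one_sub_smul_mul_le {R : Type*} [NormedRing R] [NormedAlgebra ℝ R] (a u : R) {h : ℝ}
    (hh : 0 ≤ h) : ‖(1 - h • a) * u‖ ≤ (1 + h * ‖a‖) * ‖u‖ := calc
  ‖(1 - h • a) * u‖ = ‖u - h • (a * u)‖ := by rw [sub_mul, one_mul, smul_mul_assoc]
  _ ≤ ‖u‖ + ‖h • (a * u)‖ := norm_sub_le _ _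
  _ ≤ ‖u‖ + h * (‖a‖ * ‖u‖) := by
    rw [norm_smul, Real.norm_of_nonneg hh]
    gcongr
    exact norm_mul_le a u
  _ = (1 + h * ‖a‖) * ‖u‖ := by ring

section Algebra

variable {𝓐 : Type*} [Ring 𝓐] [Algebra ℝ 𝓐] [StarRing 𝓐]

/-- A step of length `h` for the Lyapunov equation `x' = p - (a * x + x * star a)`. It differs from
the explicit Euler step by the second-order term `h² • (a * x * star a)`, which makes it preserve
nonnegativity. -/
def lyapunovStep (a p : 𝓐) (h : ℝ) (x : 𝓐) : 𝓐 :=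
  (1 - h • a) * x * star (1 - h • a) + h • p

theorem lyapunovStep_zero (a p x : 𝓐) : lyapunovStep a p 0 x = x := by
  simp [lyapunovStep]

theorem lyapunovStep_nonneg [PartialOrder 𝓐] [StarOrderedRing 𝓐] [PosSMulMono ℝ 𝓐]
    {a p x : 𝓐} {h : ℝ} (hp : 0 ≤ p) (hh : 0 ≤ h) (hx : 0 ≤ x) : 0 ≤ lyapunovStep a p h x :=
  add_nonneg (star_right_conjugate_nonneg hx _) (smul_nonneg hh hp)

theorem mul_sub_add_sub_mul_star_eq_mul_mul_sub_mul_mul [StarModule ℝ 𝓐] {x y q : 𝓐}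
    (hx : IsSelfAdjoint x) (hy : IsSelfAdjoint y) (hq : IsSelfAdjoint q) :
    ((2⁻¹ : ℝ) • ((x + y) * q)) * (y - x) + (y - x) * star ((2⁻¹ : ℝ) • ((x + y) * q)) =
      y * q * y - x * q * x := by
  have hdouble : (x + y) * q * (y - x) + (y - x) * (q * (x + y)) =
      (2 : ℝ) • (y * q * y - x * q * x) := by
    rw [two_smul]
    noncomm_ring
  rw [star_smul, star_mul, star_add, hx, hy, hq, star_trivial, smul_mul_assoc, mul_smul_comm,
    ← smul_add, hdouble, inv_smul_smul₀ two_ne_zero]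

end Algebra

section Normed

variable {𝓐 : Type*} [NormedRing 𝓐] [NormedAlgebra ℝ 𝓐] [StarRing 𝓐] [NormedStarGroup 𝓐]

theorem hasDerivAt_lyapunovStep_zero [StarModule ℝ 𝓐] (a p x : 𝓐) :
    HasDerivAt (fun h => lyapunovStep a p h x) (p - (a * x + x * star a)) 0 := by
  have hfactor : HasDerivAt (fun h : ℝ => 1 - h • a) (-a) 0 := by
    simpa using ((hasDerivAt_id (0 : ℝ)).smul_const a).const_sub 1
  have hforcing : HasDerivAt (fun h : ℝ => h • p) p 0 := by
    simpa using (hasDerivAt_id (0 : ℝ)).smul_const p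
  convert! ((hfactor.mul_const x).mul hfactor.star).add hforcing using 1
  simp
  abel

theorem norm_lyapunovStep_sub_le (a p x y : 𝓐) {h : ℝ} (hh : 0 ≤ h) :
    ‖lyapunovStep a p h x - lyapunovStep a p h y‖ ≤ (1 + h * ‖a‖) ^ 2 * ‖x - y‖ := by
  have hright (u : 𝓐) : ‖u * star (1 - h • a)‖ ≤ (1 + h * ‖a‖) * ‖u‖ := calc
    ‖u * star (1 - h • a)‖ = ‖(1 - h • a) * star u‖ := by rw [← norm_star, star_mul, star_star]
    _ ≤ (1 + h * ‖a‖) * ‖star u‖ := norm_one_sub_smul_mul_le a _ hh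
    _ = (1 + h * ‖a‖) * ‖u‖ := by rw [norm_star]
  calc ‖lyapunovStep a p h x - lyapunovStep a p h y‖
      = ‖(1 - h • a) * (x - y) * star (1 - h • a)‖ := by
        simp only [lyapunovStep, mul_sub, sub_mul, add_sub_add_right_eq_sub]
    _ ≤ (1 + h * ‖a‖) * ‖(1 - h • a) * (x - y)‖ := hright _
    _ ≤ (1 + h * ‖a‖) * ((1 + h * ‖a‖) * ‖x - y‖) := by
        gcongr
        exact norm_one_sub_smul_mul_le a _ hh
    _ = (1 + h * ‖a‖) ^ 2 * ‖x - y‖ := by ring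

variable [StarModule ℝ 𝓐] [PartialOrder 𝓐] [StarOrderedRing 𝓐]

theorem infDist_lyapunovStep_le {a p : 𝓐} (x : 𝓐) {h : ℝ} (hp : 0 ≤ p) (hh : 0 ≤ h) :
    infDist (lyapunovStep a p h x) (Ici 0) ≤ (1 + h * ‖a‖) ^ 2 * infDist x (Ici 0) := by
  refine infDist_le_mul_infDist_of_mapsTo (by positivity) (fun y _ => ?_)
    (fun y hy => lyapunovStep_nonneg hp hh hy) nonempty_Ici
  simpa only [dist_eq_norm] using norm_lyapunovStep_sub_le a p x y hh

theorem eventually_slope_infDist_Ici_lt_s7 {f : ℝ → 𝓐} {f' a : 𝓐} {t r : ℝ}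
    (hf : HasDerivWithinAt f f' (Ici t) t) (hf' : 0 ≤ f' + (a * f t + f t * star a))
    (hr : 2 * ‖a‖ * infDist (f t) (Ici 0) < r) :
    ∀ᶠ z in 𝓝[>] t, slope (fun s => infDist (f s) (Ici 0)) t z < r := by
  set p := f' + (a * f t + f t * star a) with hp
  set d := infDist (f t) (Ici 0)
  let step (z : ℝ) : 𝓐 := lyapunovStep a p (z - t) (f t)
  have hstep_t : step t = f t := by simp only [step, sub_self, lyapunovStep_zero]
  have hstep : HasDerivAt step f' t := by
    have := hasDerivAt_lyapunovStep_zero a p (f t)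
    rw [hp, add_sub_cancel_right, ← sub_self t] at this
    exact this.comp_sub_const t t
  have herror : HasDerivWithinAt (fun z => ‖f z - step z‖) 0 (Ici t) t := by
    have := hf.sub hstep.hasDerivWithinAt
    rw [hasDerivWithinAt_iff_isLittleO] at this ⊢
    simpa [hstep_t] using this
  have hgrowth : HasDerivAt (fun z => (1 + (z - t) * ‖a‖) ^ 2 * d) (2 * ‖a‖ * d) t := by
    have : HasDerivAt (fun z => 1 + (z - t) * ‖a‖) ‖a‖ t := by
      simpa using (((hasDerivAt_id t).sub_const t).mul_const ‖a‖).const_add 1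
    simpa using (this.pow 2).mul_const d
  let bound (z : ℝ) : ℝ := ‖f z - step z‖ + (1 + (z - t) * ‖a‖) ^ 2 * d
  have hbound_t : bound t = d := by simp [bound, hstep_t]
  have hbound : HasDerivWithinAt bound (2 * ‖a‖ * d) (Ici t) t := by
    simpa only [zero_add] using! herror.add hgrowth.hasDerivWithinAt
  have hle {z : ℝ} (hz : t ≤ z) : infDist (f z) (Ici 0) ≤ bound z := calc
    infDist (f z) (Ici 0) ≤ dist (f z) (step z) + infDist (step z) (Ici 0) :=
      infDist_le_infDist_add_dist.trans_eq (add_comm _ _)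
    _ ≤ ‖f z - step z‖ + (1 + (z - t) * ‖a‖) ^ 2 * d := by
      rw [dist_eq_norm]
      gcongr
      exact infDist_lyapunovStep_le (f t) hf' (sub_nonneg.2 hz)
  filter_upwards [hbound.Ioi_of_Ici.limsup_slope_le' self_notMem_Ioi hr, self_mem_nhdsWithin]
    with z hz (htz : t < z)
  refine lt_of_le_of_lt ?_ hz
  rw [slope_def_field, slope_def_field, hbound_t]
  gcongr
  exact hle htz.le

variable [ClosedIciTopology 𝓐] {a b : ℝ}

theorem nonneg_of_lyapunov_inequality {C : ℝ} {A D D' : ℝ → 𝓐}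
    (hDcont : ContinuousOn D (Icc a b))
    (hD : ∀ t ∈ Ico a b, HasDerivWithinAt D (D' t) (Ici t) t)
    (hA : ∀ t ∈ Ico a b, ‖A t‖ ≤ C)
    (hineq : ∀ t ∈ Ico a b, 0 ≤ D' t + (A t * D t + D t * star (A t)))
    (ha : 0 ≤ D a) : ∀ t ∈ Icc a b, 0 ≤ D t := by
  intro t ht
  have hdist : infDist (D t) (Ici 0) ≤ gronwallBound 0 (2 * C) 0 (t - a) := by
    refine le_gronwallBound_of_liminf_deriv_right_le
      (f := fun s => infDist (D s) (Ici 0)) (f' := fun s => 2 * ‖A s‖ * infDist (D s) (Ici 0))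
      ((continuous_infDist_pt _).comp_continuousOn hDcont)
      (fun s hs r hr => (eventually_slope_infDist_Ici_lt_s7 (hD s hs) (hineq s hs) hr).frequently)
      (infDist_zero_of_mem ha).le (fun s hs => ?_) t ht
    rw [add_zero]
    gcongr
    · exact infDist_nonneg
    · exact hA s hs
  rw [gronwallBound_ε0, zero_mul] at hdist
  exact (isClosed_Ici.mem_iff_infDist_zero nonempty_Ici).2 (hdist.antisymm infDist_nonneg)

theorem matrix_riccati_comparison_rank_one_general {X X' Y Y' Q : ℝ → 𝓐}
    (hX : ∀ t ∈ Ioc a b, HasDerivWithinAt X (X' t) (Ioc a b) t)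
    (hY : ∀ t ∈ Ioc a b, HasDerivWithinAt Y (Y' t) (Ioc a b) t)
    (hQ : ContinuousOn Q (Ioc a b))
    (hXsa : ∀ t ∈ Ioc a b, IsSelfAdjoint (X t)) (hYsa : ∀ t ∈ Ioc a b, IsSelfAdjoint (Y t))
    (hQsa : ∀ t ∈ Ioc a b, IsSelfAdjoint (Q t))
    (hineq : ∀ t ∈ Ioc a b, X' t + X t * Q t * X t ≤ Y' t + Y t * Q t * Y t)
    (hinit : ∃ᶠ t in 𝓝[>] a, X t ≤ Y t) :
    ∀ t ∈ Ioc a b, X t ≤ Y t := by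
  intro t ht
  obtain ⟨s, hXYs, hs⟩ := (hinit.and_eventually (Ioc_mem_nhdsGT ht.1)).exists
  have hsub : Icc s t ⊆ Ioc a b := fun u hu => ⟨hs.1.trans_le hu.1, hu.2.trans ht.2⟩
  have hXc : ContinuousOn X (Icc s t) := fun u hu => (hX u (hsub hu)).continuousWithinAt.mono hsub
  have hYc : ContinuousOn Y (Icc s t) := fun u hu => (hY u (hsub hu)).continuousWithinAt.mono hsub
  let A (u : ℝ) : 𝓐 := (2⁻¹ : ℝ) • ((X u + Y u) * Q u)
  have hAc : ContinuousOn A (Icc s t) := ((hXc.add hYc).mul (hQ.mono hsub)).const_smul _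
  obtain ⟨C, hC⟩ := isCompact_Icc.exists_bound_of_continuousOn hAc
  have hderiv : ∀ u ∈ Ico s t, HasDerivWithinAt (fun v => Y v - X v) (Y' u - X' u) (Ici u) u := by
    intro u hu
    have hu' := hsub (Ico_subset_Icc_self hu)
    exact ((hY u hu').sub (hX u hu')).mono_of_mem_nhdsWithin <|
      mem_of_superset (Ico_mem_nhdsGE hu.2) fun v hv => ⟨hu'.1.trans_le hv.1, hv.2.le.trans ht.2⟩
  have hlyapunov : ∀ u ∈ Ico s t,
      0 ≤ Y' u - X' u + (A u * (Y u - X u) + (Y u - X u) * star (A u)) := by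
    intro u hu
    have hu' := hsub (Ico_subset_Icc_self hu)
    rw [mul_sub_add_sub_mul_star_eq_mul_mul_sub_mul_mul (hXsa u hu') (hYsa u hu') (hQsa u hu'),
      sub_add_sub_comm]
    exact sub_nonneg.2 (hineq u hu')
  exact sub_nonneg.1 <| nonneg_of_lyapunov_inequality (hYc.sub hXc) hderiv
    (fun u hu => hC u (Ico_subset_Icc_self hu)) hlyapunov (sub_nonneg.2 hXYs) t
    (right_mem_Icc.2 hs.2)

end Normed

theorem sq_add_vecMulVec_mulVec_star_eq_mul_mul {n R : Type*} [Fintype n] [DecidableEq n]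
    [Semiring R] [StarRing R] {M : Matrix n n R} (hM : M.IsHermitian) (e : n → R) :
    M ^ 2 + vecMulVec (M *ᵥ e) (star (M *ᵥ e)) = M * (1 + vecMulVec e (star e)) * M := by
  rw [star_mulVec, hM.eq, ← vecMulVec_mul, ← mul_vecMulVec, mul_add, add_mul, mul_one, sq]

theorem hasDerivWithinAt_matrix_of_apply {m n 𝕜 E : Type*} [Finite n]
    [NontriviallyNormedField 𝕜] [NormedAddCommGroup E] [NormedSpace 𝕜 E]
    {M : 𝕜 → Matrix m n E} {M' : Matrix m n E} {s : Set 𝕜} {t : 𝕜}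
    (h : ∀ i j, HasDerivWithinAt (fun u => M u i j) (M' i j) s t) :
    HasDerivWithinAt M M' s t := by
  have := Fintype.ofFinite n
  exact hasDerivWithinAt_pi.2 fun i => hasDerivWithinAt_pi.2 fun j => h i j

/-- Matrix Riccati comparison with a rank-one quadratic term: if
`Y' + Y² + (Ye₁)(Ye₁)ᴴ - (X' + X² + (Xe₁)(Xe₁)ᴴ)` is positive semidefinite on `(0, T]`
for `C¹` Hermitian-matrix-valued `X, Y`, where `e₁` is the first standard basis vector,
and `Y - X` is positive semidefinite near `0`, then `Y - X` is positive semidefinite on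
all of `(0, T]`. -/
theorem matrix_riccati_comparison_rank_one (n : ℕ) (hn : 1 ≤ n) (T : ℝ) (hT : 0 < T)
    (X X' Y Y' : ℝ → Matrix (Fin n) (Fin n) ℂ)
    (e₁ : Fin n → ℂ) (he₁ : e₁ = fun i : Fin n => if (i : ℕ) = 0 then (1 : ℂ) else 0)
    (hX : ∀ ρ ∈ Set.Ioc 0 T, ∀ i j,
      HasDerivWithinAt (fun t => X t i j) (X' ρ i j) (Set.Ioc 0 T) ρ)
    (hX' : ∀ i j, ContinuousOn (fun ρ => X' ρ i j) (Set.Ioc 0 T))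
    (hY : ∀ ρ ∈ Set.Ioc 0 T, ∀ i j,
      HasDerivWithinAt (fun t => Y t i j) (Y' ρ i j) (Set.Ioc 0 T) ρ)
    (hY' : ∀ i j, ContinuousOn (fun ρ => Y' ρ i j) (Set.Ioc 0 T))
    (hHermX : ∀ ρ ∈ Set.Ioc 0 T, (X ρ).IsHermitian)
    (hHermY : ∀ ρ ∈ Set.Ioc 0 T, (Y ρ).IsHermitian)
    (hineq : ∀ ρ ∈ Set.Ioc 0 T,
      ((Y' ρ + Y ρ ^ 2 + vecMulVec (Y ρ *ᵥ e₁) (star (Y ρ *ᵥ e₁)))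
        - (X' ρ + X ρ ^ 2 + vecMulVec (X ρ *ᵥ e₁) (star (X ρ *ᵥ e₁)))).PosSemidef)
    (hinit : ∃ ρ₀ ∈ Set.Ioc 0 T, ∀ ρ ∈ Set.Ioc 0 ρ₀, (Y ρ - X ρ).PosSemidef) :
    ∀ ρ ∈ Set.Ioc 0 T, (Y ρ - X ρ).PosSemidef := by
  obtain ⟨ρ₀, hρ₀, hinit⟩ := hinit
  have hnear : ∀ᶠ ρ in 𝓝[>] 0, (Y ρ - X ρ).PosSemidef :=
    mem_of_superset (Ioc_mem_nhdsGT hρ₀.1) hinit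
  open scoped MatrixOrder Matrix.Norms.L2Operator in
  refine matrix_riccati_comparison_rank_one_general
    (fun ρ hρ => hasDerivWithinAt_matrix_of_apply (hX ρ hρ))
    (fun ρ hρ => hasDerivWithinAt_matrix_of_apply (hY ρ hρ)) continuousOn_const hHermX hHermY
    (fun _ _ => (PosSemidef.one.add (posSemidef_vecMulVec_self_star e₁)).isHermitian)
    (fun ρ hρ => ?_) hnear.frequently
  rw [← sq_add_vecMulVec_mulVec_star_eq_mul_mul (hHermX ρ hρ),
    ← sq_add_vecMulVec_mulVec_star_eq_mul_mul (hHermY ρ hρ), Matrix.le_iff, ← add_assoc,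
    ← add_assoc]
  exact hineq ρ hρ
end

section
/- Let n ≥ 1 and A₁, A₂, K ≥ 0 be real numbers, and set c = (4√n + 3)·A₁² + 2·A₂ + K. Let A ∈ M_n(ℂ) be a matrix such that A + A* + √2·A₁·I is positive semidefinite. Then for every ρ > 0 the matrix ( −1/ρ² + (1/ρ + √c)² )·I + (1/ρ + √c)·(A + A*) − ( (2√n + 1/2)·A₁² + A₂ + K/2 )·I is positive semidefinite. -/
open Matrix ComplexOrder

/-!
Write `t = 1/ρ`, `s = √c` and `a = √2·A₁`. The subtracted constant `(2√n + 1/2)A₁² + A₂ + K/2` is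
`c/2 - A₁² = (s² - a²)/2`, so bounding `A + Aᴴ` below by `-a·I` reduces the matrix inequality to a
scalar one, which holds because of the identity
`-t² + (t + s)² - (t + s)a - (s² - a²)/2 = t(2s - a) + (s - a)²/2`.
-/

section OrderedField

variable {R : Type*} [Field R] [LinearOrder R] [IsStrictOrderedRing R]

theorem add_mul_add_half_sq_sub_sq_le {t s a : R} (ht : 0 ≤ t) (ha : a ≤ 2 * s) :
    (t + s) * a + (s ^ 2 - a ^ 2) / 2 ≤ -t ^ 2 + (t + s) ^ 2 := by
  have hgap : 0 ≤ t * (2 * s - a) + (s - a) ^ 2 / 2 :=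
    add_nonneg (mul_nonneg ht (sub_nonneg.2 ha)) (by positivity)
  linear_combination hgap

end OrderedField

section OrderedModule

variable {R E : Type*} [CommRing R] [PartialOrder R] [IsOrderedAddMonoid R]
  [AddCommGroup E] [PartialOrder E] [IsOrderedAddMonoid E] [Module R E] [PosSMulMono R E]

theorem smul_add_smul_sub_smul_nonneg {e H : E} {a p q r : R} (he : 0 ≤ e)
    (hH : 0 ≤ H + a • e) (hp : 0 ≤ p) (hq : p * a + r ≤ q) :
    0 ≤ q • e + p • H - r • e := by
  have hsplit : q • e + p • H - r • e = p • (H + a • e) + (q - (p * a + r)) • e := by module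
  rw [hsplit]
  exact add_nonneg (smul_nonneg hp hH) (smul_nonneg (sub_nonneg.2 hq) he)

end OrderedModule

theorem sqrt_two_mul_le_two_mul_sqrt {x c : ℝ} (hx : x ^ 2 ≤ 2 * c) : √2 * x ≤ 2 * √c :=
  calc
    √2 * x ≤ √2 * √(2 * c) := by gcongr; exact Real.le_sqrt_of_sq_le hx
    _ = 2 * √c := by rw [Real.sqrt_mul zero_le_two, ← mul_assoc, Real.mul_self_sqrt zero_le_two]

theorem supersolution_hessian_comparison_general {E : Type*} [AddCommGroup E] [PartialOrder E]
    [IsOrderedAddMonoid E] [Module ℝ E] [PosSMulMono ℝ E] {e H : E} {A₁ c κ ρ : ℝ}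
    (he : 0 ≤ e) (hH : 0 ≤ H + (√2 * A₁) • e) (hc : A₁ ^ 2 ≤ 2 * c)
    (hκ : κ + A₁ ^ 2 ≤ c / 2) (hρ : 0 < ρ) :
    0 ≤ (-1 / ρ ^ 2 + (1 / ρ + √c) ^ 2) • e + (1 / ρ + √c) • H - κ • e := by
  refine smul_add_smul_sub_smul_nonneg he hH (by positivity) ?_
  have hc₀ : 0 ≤ c := by linarith [sq_nonneg A₁]
  have hκ' : κ ≤ (√c ^ 2 - (√2 * A₁) ^ 2) / 2 := by
    rw [mul_pow, Real.sq_sqrt hc₀, Real.sq_sqrt zero_le_two]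
    linarith
  calc
    (1 / ρ + √c) * (√2 * A₁) + κ
      ≤ (1 / ρ + √c) * (√2 * A₁) + (√c ^ 2 - (√2 * A₁) ^ 2) / 2 := by gcongr
    _ ≤ -(1 / ρ) ^ 2 + (1 / ρ + √c) ^ 2 :=
      add_mul_add_half_sq_sub_sq_le (by positivity) (sqrt_two_mul_le_two_mul_sqrt hc)
    _ = -1 / ρ ^ 2 + (1 / ρ + √c) ^ 2 := by ring

/-- Key algebraic step of the Hessian comparison: `Y(ρ) = (1/ρ + √c)·I` with
`c = (4√n + 3)A₁² + 2A₂ + K` is a supersolution of the matrix Riccati inequality,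
provided `A + Aᴴ + √2·A₁·I` is positive semidefinite. -/
theorem supersolution_hessian_comparison (n : ℕ) (hn : 1 ≤ n)
    (A₁ A₂ K : ℝ) (hA₁ : 0 ≤ A₁) (hA₂ : 0 ≤ A₂) (hK : 0 ≤ K)
    (A : Matrix (Fin n) (Fin n) ℂ)
    (hA : (A + Aᴴ + (Real.sqrt 2 * A₁) • (1 : Matrix (Fin n) (Fin n) ℂ)).PosSemidef)
    (ρ : ℝ) (hρ : 0 < ρ) :
    ((-1 / ρ ^ 2 +
        (1 / ρ + Real.sqrt ((4 * Real.sqrt n + 3) * A₁ ^ 2 + 2 * A₂ + K)) ^ 2) •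
          (1 : Matrix (Fin n) (Fin n) ℂ)
      + (1 / ρ + Real.sqrt ((4 * Real.sqrt n + 3) * A₁ ^ 2 + 2 * A₂ + K)) • (A + Aᴴ)
      - ((2 * Real.sqrt n + 1 / 2) * A₁ ^ 2 + A₂ + K / 2) •
          (1 : Matrix (Fin n) (Fin n) ℂ)).PosSemidef := by
  have hc : A₁ ^ 2 ≤ 2 * ((4 * √n + 3) * A₁ ^ 2 + 2 * A₂ + K) := by
    have : 0 ≤ √n * A₁ ^ 2 := by positivity
    linarith [sq_nonneg A₁]
  open scoped MatrixOrder in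
  exact nonneg_iff_posSemidef.1 <| supersolution_hessian_comparison_general
    zero_le_one (nonneg_iff_posSemidef.2 hA) hc (by linarith) hρ
end

section
/- Analytic form of the nearly Kähler Hessian comparison for K > 0: Let K > 0, n ≥ 1, and 0 < T < π/√(2K). Let X : (0, T] → M_n(ℂ) be continuously differentiable with X(ρ) Hermitian for every ρ, and let e₁ ∈ ℂⁿ be the first standard basis vector. Let Y(ρ) be the diagonal matrix with first entry (√(2K)/2)·cot(√(2K)·ρ) and remaining diagonal entries √(K/2)·cot(√(K/2)·ρ). Assume that D(ρ) − ( X'(ρ) + X(ρ)² + (X(ρ)e₁)(X(ρ)e₁)* ) is positive semidefinite for all ρ ∈ (0, T], where D(ρ) is the constant diagonal matrix with first entry −K and remaining entries −K/2, and that there exists ρ₀ ∈ (0, T] with Y(ρ) − X(ρ) positive semidefinite for all ρ ∈ (0, ρ₀]. Then Y(ρ) − X(ρ) is positive semidefinite for every ρ ∈ (0, T]. -/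
open Matrix ComplexOrder

/-!
The hypothesis is a Riccati inequality `X' + XAX ≤ -κ²A` with `A = 1 + e₁e₁ᴴ` and `κ = √(K/2)`,
and the comparison matrix `Y = κ cot(κAt)` solves the corresponding equation. The invertible matrix
`M = sin(κAt)` satisfies `M' = AYM`, so it serves as an integrating factor: with `Z = Y - X`,

  `(MᴴZM)' = Mᴴ((Y' + YAY) - (X' + XAX) + ZAZ)M ≥ 0`.

Hence `MᴴZM` is nondecreasing in the Loewner order, and nonnegativity of `Z` propagates forward.
-/

section MatrixDerivatives

variable {𝕜 ι : Type*} [RCLike 𝕜] {X M : ℝ → Matrix ι ι 𝕜} {X' M' : Matrix ι ι 𝕜}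
  {s : Set ℝ} {t : ℝ}

theorem hasDerivWithinAt_matrix_iff [Finite ι] :
    HasDerivWithinAt X X' s t ↔ ∀ i j, HasDerivWithinAt (fun u => X u i j) (X' i j) s t := by
  have := Fintype.ofFinite ι
  exact hasDerivWithinAt_pi.trans (forall_congr' fun _ => hasDerivWithinAt_pi)

theorem hasDerivWithinAt_conjTranspose [Finite ι] (hX : HasDerivWithinAt X X' s t) :
    HasDerivWithinAt (fun u => (X u)ᴴ) X'ᴴ s t :=
  hasDerivWithinAt_matrix_iff.2 fun i j => (hasDerivWithinAt_matrix_iff.1 hX j i).star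

theorem hasDerivWithinAt_diagonal [Finite ι] [DecidableEq ι] {d : ℝ → ι → 𝕜} {d' : ι → 𝕜}
    (hd : ∀ j, HasDerivWithinAt (fun u => d u j) (d' j) s t) :
    HasDerivWithinAt (fun u => diagonal (d u)) (diagonal d') s t := by
  refine hasDerivWithinAt_matrix_iff.2 fun i j => ?_
  obtain rfl | hij := eq_or_ne i j
  · simpa only [diagonal_apply_eq] using hd i
  · simpa only [diagonal_apply_ne _ hij] using hasDerivWithinAt_const t s (0 : 𝕜)

open scoped Matrix.Norms.Operator in
theorem hasDerivWithinAt_conjTranspose_mul_mul_same [Fintype ι]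
    (hX : HasDerivWithinAt X X' s t) (hM : HasDerivWithinAt M M' s t) :
    HasDerivWithinAt (fun u => (M u)ᴴ * X u * M u)
      ((M'ᴴ * X t + (M t)ᴴ * X') * M t + (M t)ᴴ * X t * M') s t := by
  classical
  exact ((hasDerivWithinAt_conjTranspose hM).mul hX).mul hM

open scoped Matrix.Norms.Operator in
theorem hasDerivWithinAt_re_dotProduct_mulVec_s12 [Fintype ι]
    (hX : HasDerivWithinAt X X' s t) (v w : ι → 𝕜) :
    HasDerivWithinAt (fun u => RCLike.re (v ⬝ᵥ X u *ᵥ w)) (RCLike.re (v ⬝ᵥ X' *ᵥ w)) s t :=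
  let pairing : Matrix ι ι 𝕜 →ₗ[ℝ] ℝ :=
    RCLike.reLm ∘ₗ dotProductBilin ℝ ℝ v ∘ₗ (mulVecBilin ℝ ℝ).flip w
  pairing.toContinuousLinearMap.hasFDerivAt.comp_hasDerivWithinAt t hX

end MatrixDerivatives

section RiccatiComparison

open scoped MatrixOrder

variable {𝕜 ι : Type*} [RCLike 𝕜] {s : Set ℝ}

theorem monotoneOn_of_hasDerivWithinAt_posSemidef [Finite ι] {G G' : ℝ → Matrix ι ι 𝕜}
    (hs : Convex ℝ s) (hG : ∀ t ∈ s, HasDerivWithinAt G (G' t) s t)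
    (hHerm : ∀ t ∈ s, (G t).IsHermitian) (hG' : ∀ t ∈ s, (G' t).PosSemidef) : MonotoneOn G s := by
  have := Fintype.ofFinite ι
  intro a ha b hb hab
  have hmono (v : ι → 𝕜) : MonotoneOn (fun t => RCLike.re (star v ⬝ᵥ G t *ᵥ v)) s := by
    have hderiv (t) (ht : t ∈ s) := hasDerivWithinAt_re_dotProduct_mulVec_s12 (hG t ht) (star v) v
    exact monotoneOn_of_hasDerivWithinAt_nonneg hs
      (fun t ht => (hderiv t ht).continuousWithinAt)
      (fun t ht => (hderiv t (interior_subset ht)).mono interior_subset)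
      (fun t ht => (hG' t (interior_subset ht)).re_dotProduct_nonneg v)
  have hsub : (G b - G a).IsHermitian := (hHerm b hb).sub (hHerm a ha)
  refine le_iff.2 (.of_dotProduct_mulVec_nonneg hsub fun v => RCLike.nonneg_iff.2 ⟨?_, ?_⟩)
  · simpa only [sub_mulVec, dotProduct_sub, map_sub, sub_nonneg] using hmono v ha hb hab
  · exact hsub.im_star_dotProduct_mulVec_self v

open scoped Matrix.Norms.Operator in
theorem riccati_comparison [Fintype ι] [DecidableEq ι] {A X X' Y Y' M : ℝ → Matrix ι ι 𝕜}
    (hs : Convex ℝ s) (hA : ∀ t ∈ s, (A t).PosSemidef)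
    (hX : ∀ t ∈ s, HasDerivWithinAt X (X' t) s t) (hXHerm : ∀ t ∈ s, (X t).IsHermitian)
    (hY : ∀ t ∈ s, HasDerivWithinAt Y (Y' t) s t) (hYHerm : ∀ t ∈ s, (Y t).IsHermitian)
    (hXY : ∀ t ∈ s, X' t + X t * A t * X t ≤ Y' t + Y t * A t * Y t)
    (hM : ∀ t ∈ s, HasDerivWithinAt M (A t * Y t * M t) s t)
    {a b : ℝ} (ha : a ∈ s) (hb : b ∈ s) (hab : a ≤ b) (hMb : IsUnit (M b)) (hXYa : X a ≤ Y a) :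
    X b ≤ Y b := by
  have hZHerm (t) (ht : t ∈ s) : (Y t - X t).IsHermitian := (hYHerm t ht).sub (hXHerm t ht)
  have hmono : MonotoneOn (fun t => (M t)ᴴ * (Y t - X t) * M t) s := by
    refine monotoneOn_of_hasDerivWithinAt_posSemidef hs
      (fun t ht =>
        hasDerivWithinAt_conjTranspose_mul_mul_same ((hY t ht).fun_sub (hX t ht)) (hM t ht))
      (fun t ht => isHermitian_conjTranspose_mul_mul _ (hZHerm t ht)) fun t ht => ?_
    have hdefect : (Y' t + Y t * A t * Y t - (X' t + X t * A t * X t)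
        + (Y t - X t)ᴴ * A t * (Y t - X t)).PosSemidef :=
      (le_iff.1 (hXY t ht)).add ((hA t ht).conjTranspose_mul_mul_same _)
    convert hdefect.conjTranspose_mul_mul_same (M t) using 1
    rw [(hZHerm t ht).eq, conjTranspose_mul, conjTranspose_mul, (hYHerm t ht).eq,
      (hA t ht).isHermitian.eq]
    noncomm_ring
  have hstart : 0 ≤ (M a)ᴴ * (Y a - X a) * M a :=
    nonneg_iff_posSemidef.2 ((le_iff.1 hXYa).conjTranspose_mul_mul_same (M a))
  exact le_iff.2 <| hMb.posSemidef_star_left_conjugate_iff.1 <|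
    nonneg_iff_posSemidef.1 (hstart.trans (hmono ha hb hab))

end RiccatiComparison

section CotangentSolution

open scoped MatrixOrder

variable {𝕜 ι : Type*} [RCLike 𝕜] [DecidableEq ι] {κ : ℝ} {α : ι → ℝ} {s : Set ℝ} {t : ℝ}

/-- The matrix `κ cot(κAt)` for `A = diag α`, a solution of the Riccati equation `Y' + YAY = -κ²A`
wherever no `sin(κ αⱼ t)` vanishes (where one does, `Real.cot` takes the junk value `0`). -/
noncomputable def riccatiCot (𝕜 : Type*) [RCLike 𝕜] (κ : ℝ) (α : ι → ℝ) (t : ℝ) : Matrix ι ι 𝕜 :=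
  diagonal fun j => ((κ * Real.cot (κ * α j * t) : ℝ) : 𝕜)

theorem isHermitian_diagonal_ofReal (d : ι → ℝ) :
    (diagonal fun j => (d j : 𝕜)).IsHermitian :=
  isHermitian_diagonal_of_self_adjoint _ (funext fun j => RCLike.conj_ofReal (d j))

theorem hasDerivAt_real_cot {x : ℝ} (hx : Real.sin x ≠ 0) :
    HasDerivAt Real.cot (-(1 + Real.cot x ^ 2)) x := by
  have hcot : Real.cot = fun y => Real.cos y / Real.sin y := funext Real.cot_eq_cos_div_sin
  rw [hcot]
  refine ((Real.hasDerivAt_cos x).div (Real.hasDerivAt_sin x) hx).congr_deriv ?_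
  field_simp
  ring

theorem hasDerivWithinAt_diagonal_ofReal [Finite ι] {d : ℝ → ι → ℝ} {d' : ι → ℝ}
    (hd : ∀ j, HasDerivAt (fun u => d u j) (d' j) t) :
    HasDerivWithinAt (fun u => diagonal fun j => (d u j : 𝕜)) (diagonal fun j => (d' j : 𝕜)) s t :=
  hasDerivWithinAt_diagonal fun j =>
    (RCLike.ofRealCLM (K := 𝕜)).hasFDerivAt.comp_hasDerivWithinAt t (hd j).hasDerivWithinAt

variable [Fintype ι]

theorem hasDerivWithinAt_riccatiCot (hsin : ∀ j, Real.sin (κ * α j * t) ≠ 0) :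
    HasDerivWithinAt (riccatiCot 𝕜 κ α)
      ((diagonal fun j => ((-(κ ^ 2 * α j) : ℝ) : 𝕜)) -
        riccatiCot 𝕜 κ α t * (diagonal fun j => (α j : 𝕜)) * riccatiCot 𝕜 κ α t) s t := by
  simp only [riccatiCot, diagonal_mul_diagonal, diagonal_sub, ← RCLike.ofReal_mul,
    ← RCLike.ofReal_sub]
  refine hasDerivWithinAt_diagonal_ofReal fun j => ?_
  refine (((hasDerivAt_real_cot (hsin j)).comp t
    (hasDerivAt_const_mul (κ * α j))).const_mul κ).congr_deriv ?_
  ring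

theorem hasDerivWithinAt_diagonal_sin (hsin : ∀ j, Real.sin (κ * α j * t) ≠ 0) :
    HasDerivWithinAt (fun u => diagonal fun j => (Real.sin (κ * α j * u) : 𝕜))
      ((diagonal fun j => (α j : 𝕜)) * riccatiCot 𝕜 κ α t *
        diagonal fun j => (Real.sin (κ * α j * t) : 𝕜)) s t := by
  simp only [riccatiCot, diagonal_mul_diagonal, ← RCLike.ofReal_mul]
  refine hasDerivWithinAt_diagonal_ofReal fun j => ?_
  refine (hasDerivAt_const_mul (κ * α j)).sin.congr_deriv ?_
  have hcot_mul_sin : Real.cot (κ * α j * t) * Real.sin (κ * α j * t) = Real.cos (κ * α j * t) := by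
    rw [Real.cot_eq_cos_div_sin, div_mul_cancel₀ _ (hsin j)]
  linear_combination -(κ * α j) * hcot_mul_sin

theorem riccatiCot_comparison {X X' : ℝ → Matrix ι ι 𝕜} (hs : Convex ℝ s) (hα : ∀ j, 0 ≤ α j)
    (hsin : ∀ t ∈ s, ∀ j, Real.sin (κ * α j * t) ≠ 0)
    (hX : ∀ t ∈ s, HasDerivWithinAt X (X' t) s t) (hHerm : ∀ t ∈ s, (X t).IsHermitian)
    (hineq : ∀ t ∈ s, ((diagonal fun j => ((-(κ ^ 2 * α j) : ℝ) : 𝕜)) -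
      (X' t + X t * (diagonal fun j => (α j : 𝕜)) * X t)).PosSemidef)
    {a b : ℝ} (ha : a ∈ s) (hb : b ∈ s) (hab : a ≤ b)
    (hinit : (riccatiCot 𝕜 κ α a - X a).PosSemidef) : (riccatiCot 𝕜 κ α b - X b).PosSemidef := by
  have hA : (diagonal fun j => (α j : 𝕜)).PosSemidef :=
    .diagonal fun j => RCLike.ofReal_nonneg.2 (hα j)
  have hunit : IsUnit (diagonal fun j => (Real.sin (κ * α j * b) : 𝕜)) :=
    isUnit_diagonal.2 <| Pi.isUnit_iff.2 fun j => (RCLike.ofReal_ne_zero.2 (hsin b hb j)).isUnit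
  exact riccati_comparison hs (fun _ _ => hA) hX hHerm
    (fun t ht => hasDerivWithinAt_riccatiCot (hsin t ht))
    (fun _ _ => isHermitian_diagonal_ofReal _)
    (fun t ht => by simpa only [sub_add_cancel] using! le_iff.2 (hineq t ht))
    (fun t ht => hasDerivWithinAt_diagonal_sin (hsin t ht)) ha hb hab hunit hinit

end CotangentSolution

section NearlyKahler

variable {𝕜 ι : Type*} [RCLike 𝕜] [DecidableEq ι]

/-- The eigenvalues of `1 + e₁e₁ᴴ`, where `e₁` is the basis vector at `i₀`: the quadratic terms
`X² + (Xe₁)(Xe₁)ᴴ` count the gradient direction twice. -/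
def gradientWeight (i₀ j : ι) : ℝ := if j = i₀ then 2 else 1

theorem gradientWeight_nonneg (i₀ j : ι) : 0 ≤ gradientWeight i₀ j := by
  unfold gradientWeight
  split_ifs <;> norm_num

theorem diagonal_gradientWeight (i₀ : ι) :
    (diagonal fun j => (gradientWeight i₀ j : 𝕜)) =
      1 + vecMulVec (Pi.single i₀ 1) (star (Pi.single i₀ 1)) := by
  rw [Pi.star_single, star_one, ← single_eq_single_vecMulVec_single, ← diagonal_single,
    ← diagonal_one, diagonal_add]
  congr! with j
  obtain rfl | hj := eq_or_ne j i₀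
  · rw [gradientWeight, if_pos rfl, Pi.single_eq_same, RCLike.ofReal_ofNat, one_add_one_eq_two]
  · rw [gradientWeight, if_neg hj, Pi.single_eq_of_ne hj, RCLike.ofReal_one, add_zero]

theorem mul_diagonal_gradientWeight_mul [Fintype ι] {X : Matrix ι ι 𝕜} (hX : X.IsHermitian)
    (i₀ : ι) :
    X * (diagonal fun j => (gradientWeight i₀ j : 𝕜)) * X =
      X ^ 2 + vecMulVec (X *ᵥ Pi.single i₀ 1) (star (X *ᵥ Pi.single i₀ 1)) := by
  rw [diagonal_gradientWeight, mul_add, mul_one, add_mul, ← sq, mul_vecMulVec, vecMulVec_mul,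
    star_mulVec, hX.eq]

theorem sqrt_two_mul_eq_two_mul_sqrt_half (K : ℝ) : √(2 * K) = 2 * √(K / 2) := by
  rw [show 2 * K = 2 ^ 2 * (K / 2) by ring, Real.sqrt_mul (by positivity), Real.sqrt_sq zero_le_two]

theorem riccatiCot_gradientWeight (K : ℝ) (i₀ : ι) (ρ : ℝ) :
    riccatiCot 𝕜 √(K / 2) (gradientWeight i₀) ρ = diagonal fun j =>
      if j = i₀ then
        ((√(2 * K) / 2 * (Real.cos (√(2 * K) * ρ) / Real.sin (√(2 * K) * ρ)) : ℝ) : 𝕜)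
      else ((√(K / 2) * (Real.cos (√(K / 2) * ρ) / Real.sin (√(K / 2) * ρ)) : ℝ) : 𝕜) := by
  unfold riccatiCot gradientWeight
  congr! 2 with j
  split_ifs
  · rw [sqrt_two_mul_eq_two_mul_sqrt_half, Real.cot_eq_cos_div_sin, mul_comm √(K / 2) 2,
      mul_div_cancel_left₀ _ two_ne_zero]
  · rw [Real.cot_eq_cos_div_sin, mul_one]

theorem neg_sq_mul_gradientWeight {K : ℝ} (hK : 0 ≤ K) (i₀ : ι) :
    (fun j => ((-(√(K / 2) ^ 2 * gradientWeight i₀ j) : ℝ) : 𝕜)) =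
      fun j => if j = i₀ then ((-K : ℝ) : 𝕜) else ((-(K / 2) : ℝ) : 𝕜) := by
  funext j
  rw [Real.sq_sqrt (div_nonneg hK zero_le_two)]
  unfold gradientWeight
  split_ifs
  · rw [div_mul_cancel₀ K two_ne_zero]
  · rw [mul_one]

theorem sin_gradientWeight_pos {K T ρ : ℝ} (hK : 0 < K) (hT : T < Real.pi / √(2 * K)) (i₀ j : ι)
    (hρ : ρ ∈ Set.Ioc 0 T) : 0 < Real.sin (√(K / 2) * gradientWeight i₀ j * ρ) := by
  have hκ : 0 < √(K / 2) := Real.sqrt_pos.2 (half_pos hK)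
  have hρπ : 2 * √(K / 2) * ρ < Real.pi := by
    have := hρ.2.trans_lt hT
    rwa [lt_div_iff₀' (by positivity), sqrt_two_mul_eq_two_mul_sqrt_half] at this
  have hκρ := mul_pos hκ hρ.1
  apply Real.sin_pos_of_pos_of_lt_pi <;> unfold gradientWeight <;> split_ifs <;> linarith

theorem nearly_kahler_hessian_comparison_pos_general [Fintype ι] {K T : ℝ} (hK : 0 < K)
    (hT : T < Real.pi / √(2 * K)) {X X' Y : ℝ → Matrix ι ι 𝕜} {D : Matrix ι ι 𝕜} {i₀ : ι}
    {e₁ : ι → 𝕜} (he₁ : e₁ = fun i => if i = i₀ then 1 else 0)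
    (hY : Y = fun ρ => diagonal fun j =>
      if j = i₀ then
        ((√(2 * K) / 2 * (Real.cos (√(2 * K) * ρ) / Real.sin (√(2 * K) * ρ)) : ℝ) : 𝕜)
      else ((√(K / 2) * (Real.cos (√(K / 2) * ρ) / Real.sin (√(K / 2) * ρ)) : ℝ) : 𝕜))
    (hD : D = diagonal fun j => if j = i₀ then ((-K : ℝ) : 𝕜) else ((-(K / 2) : ℝ) : 𝕜))
    (hX : ∀ ρ ∈ Set.Ioc 0 T, ∀ i j,
      HasDerivWithinAt (fun t => X t i j) (X' ρ i j) (Set.Ioc 0 T) ρ)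
    (hHerm : ∀ ρ ∈ Set.Ioc 0 T, (X ρ).IsHermitian)
    (hineq : ∀ ρ ∈ Set.Ioc 0 T,
      (D - (X' ρ + X ρ ^ 2 + vecMulVec (X ρ *ᵥ e₁) (star (X ρ *ᵥ e₁)))).PosSemidef)
    (hinit : ∃ᶠ ρ in nhdsWithin 0 (Set.Ioi 0), (Y ρ - X ρ).PosSemidef) :
    ∀ ρ ∈ Set.Ioc 0 T, (Y ρ - X ρ).PosSemidef := by
  intro ρ hρ
  rw [← neg_sq_mul_gradientWeight hK.le] at hD
  simp only [← riccatiCot_gradientWeight] at hY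
  obtain rfl : e₁ = Pi.single i₀ 1 := he₁.trans (funext fun i => (Pi.single_apply i₀ 1 i).symm)
  subst hY hD
  obtain ⟨ρ₀, hinit, hρ₀⟩ := (hinit.and_eventually (Ioc_mem_nhdsGT hρ.1)).exists
  refine riccatiCot_comparison (convex_Ioc 0 T) (gradientWeight_nonneg i₀)
    (fun t ht j => (sin_gradientWeight_pos hK hT i₀ j ht).ne')
    (fun t ht => hasDerivWithinAt_matrix_iff.2 (hX t ht)) hHerm (fun t ht => ?_)
    ⟨hρ₀.1, hρ₀.2.trans hρ.2⟩ hρ hρ₀.2 hinit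
  simpa only [mul_diagonal_gradientWeight_mul (hHerm t ht), add_assoc] using hineq t ht

end NearlyKahler

/-- Analytic form of the nearly Kähler Hessian comparison for `K > 0`: if the Hermitian
`C¹` matrix-valued function `X` satisfies
`X' + X² + (Xe₁)(Xe₁)ᴴ ≤ D = diag(-K, -K/2, …, -K/2)` on `(0, T]` with
`T < π/√(2K)`, and `X ≤ Y` near `0` where
`Y(ρ) = diag((√(2K)/2)·cot(√(2K)ρ), √(K/2)·cot(√(K/2)ρ), …)`, then `X ρ ≤ Y ρ` for all
`ρ ∈ (0, T]`. -/
theorem nearly_kahler_hessian_comparison_pos (K : ℝ) (hK : 0 < K) (n : ℕ) (hn : 1 ≤ n)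
    (T : ℝ) (hT : 0 < T) (hT' : T < Real.pi / Real.sqrt (2 * K))
    (X X' : ℝ → Matrix (Fin n) (Fin n) ℂ)
    (e₁ : Fin n → ℂ) (he₁ : e₁ = fun i : Fin n => if (i : ℕ) = 0 then (1 : ℂ) else 0)
    (Y : ℝ → Matrix (Fin n) (Fin n) ℂ)
    (hY : Y = fun ρ => Matrix.diagonal (fun j : Fin n =>
      if (j : ℕ) = 0 then
        ((Real.sqrt (2 * K) / 2 *
          (Real.cos (Real.sqrt (2 * K) * ρ) / Real.sin (Real.sqrt (2 * K) * ρ)) : ℝ) : ℂ)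
      else
        ((Real.sqrt (K / 2) *
          (Real.cos (Real.sqrt (K / 2) * ρ) / Real.sin (Real.sqrt (K / 2) * ρ)) : ℝ) : ℂ)))
    (D : Matrix (Fin n) (Fin n) ℂ)
    (hD : D = Matrix.diagonal (fun j : Fin n =>
      if (j : ℕ) = 0 then ((-K : ℝ) : ℂ) else ((-(K / 2) : ℝ) : ℂ)))
    (hX : ∀ ρ ∈ Set.Ioc 0 T, ∀ i j,
      HasDerivWithinAt (fun t => X t i j) (X' ρ i j) (Set.Ioc 0 T) ρ)
    (hX' : ∀ i j, ContinuousOn (fun ρ => X' ρ i j) (Set.Ioc 0 T))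
    (hHerm : ∀ ρ ∈ Set.Ioc 0 T, (X ρ).IsHermitian)
    (hineq : ∀ ρ ∈ Set.Ioc 0 T,
      (D - (X' ρ + X ρ ^ 2 + vecMulVec (X ρ *ᵥ e₁) (star (X ρ *ᵥ e₁)))).PosSemidef)
    (hinit : ∃ ρ₀ ∈ Set.Ioc 0 T, ∀ ρ ∈ Set.Ioc 0 ρ₀, (Y ρ - X ρ).PosSemidef) :
    ∀ ρ ∈ Set.Ioc 0 T, (Y ρ - X ρ).PosSemidef := by
  obtain ⟨m, rfl⟩ := Nat.exists_eq_add_of_le' hn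
  obtain ⟨ρ₀, hρ₀, hinit⟩ := hinit
  simp only [Fin.val_eq_zero_iff] at he₁ hY hD
  exact nearly_kahler_hessian_comparison_pos_general hK hT' he₁ hY hD hX hHerm hineq
    (Filter.Eventually.frequently <| Filter.mem_of_superset (Ioc_mem_nhdsGT hρ₀.1) hinit)
end

section
/- Analytic form of the nearly Kähler Hessian comparison for K = 0: Let n ≥ 1 and T > 0. Let X : (0, T] → M_n(ℂ) be continuously differentiable with X(ρ) Hermitian for every ρ, and let e₁ ∈ ℂⁿ be the first standard basis vector. Let Y(ρ) be the diagonal matrix with first entry 1/(2ρ) and remaining diagonal entries 1/ρ. Assume that −( X'(ρ) + X(ρ)² + (X(ρ)e₁)(X(ρ)e₁)* ) is positive semidefinite for all ρ ∈ (0, T], and that there exists ρ₀ ∈ (0, T] with Y(ρ) − X(ρ) positive semidefinite for all ρ ∈ (0, ρ₀]. Then Y(ρ) − X(ρ) is positive semidefinite for every ρ ∈ (0, T]. -/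
open Matrix ComplexOrder

/-!
Both `X` and `Y` are governed by the quadratic form `M ↦ M P M` with `P = 1 + e₁ e₁ᴴ`: since `X` is
Hermitian, `X² + (X e₁)(X e₁)ᴴ = X P X`, while `Y ρ = ρ⁻¹ P⁻¹` solves `Y' + Y P Y = 0`. The
difference `Z = Y - X` satisfies `Y P Y - X P X = Z (P Y) + (X P) Z`, so the Riccati inequality is a
linear one, `Z' + Z B + C Z ≥ 0`. Positivity propagates along it: for large `L` and every `ε > 0`,
`Z + ε exp (L t)` cannot lose strict positivity, because at the first time `t` at which it acquires
a unit null vector `v`, this `v` is an eigenvector of `Z t` and the inequality forces the derivative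
of the form at `v` to be positive.
-/

open Set Filter Topology Metric

section Touching

variable {E : Type*} [TopologicalSpace E] [T2Space E] {K : Set E} {f f' : ℝ → E → ℝ} {a b : ℝ}

lemma exists_first_nonpos (hK : IsCompact K)
    (hf : ContinuousOn (fun p : ℝ × E => f p.1 p.2) (Icc a b ×ˢ K))
    (hneg : ∃ t ∈ Icc a b, ∃ v ∈ K, f t v ≤ 0) :
    ∃ t ∈ Icc a b, ∃ v ∈ K, f t v ≤ 0 ∧ ∀ s ∈ Ico a t, ∀ w ∈ K, 0 < f s w := by
  have hIK : IsCompact (Icc a b ×ˢ K) := isCompact_Icc.prod hK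
  have hS : IsCompact ((Icc a b ×ˢ K) ∩ (fun p : ℝ × E => f p.1 p.2) ⁻¹' Iic 0) :=
    hIK.of_isClosed_subset (hf.preimage_isClosed_of_isClosed hIK.isClosed isClosed_Iic)
      inter_subset_left
  obtain ⟨t₀, ht₀, v₀, hv₀, hle₀⟩ := hneg
  obtain ⟨⟨t, v⟩, ⟨⟨ht, hv⟩, hle⟩, hmin⟩ :=
    hS.exists_isMinOn ⟨(t₀, v₀), ⟨ht₀, hv₀⟩, hle₀⟩ continuous_fst.continuousOn
  refine ⟨t, ht, v, hv, hle, fun s hs w hw => ?_⟩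
  by_contra! hsw
  have hts : t ≤ s := isMinOn_iff.1 hmin (s, w) ⟨⟨⟨hs.1, hs.2.le.trans ht.2⟩, hw⟩, hsw⟩
  exact hs.2.not_ge hts

lemma pos_of_deriv_pos_of_touching (hK : IsCompact K)
    (hf : ContinuousOn (fun p : ℝ × E => f p.1 p.2) (Icc a b ×ˢ K))
    (hderiv : ∀ t ∈ Icc a b, ∀ v ∈ K, HasDerivWithinAt (f · v) (f' t v) (Icc a b) t)
    (ha : ∀ v ∈ K, 0 < f a v)
    (htouch : ∀ t ∈ Icc a b, ∀ v ∈ K, (∀ w ∈ K, 0 ≤ f t w) → f t v = 0 → 0 < f' t v) :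
    ∀ t ∈ Icc a b, ∀ v ∈ K, 0 < f t v := by
  by_contra! hneg
  obtain ⟨t, ht, v, hv, hle, hpos⟩ := exists_first_nonpos hK hf hneg
  have hat : a < t := ht.1.lt_of_ne fun h => (ha v hv).not_ge (h ▸ hle)
  have hleft : ∀ᶠ s in 𝓝[<] t, s ∈ Ico a t := Ico_mem_nhdsLT hat
  have hderiv_left : ∀ w ∈ K, HasDerivWithinAt (f · w) (f' t w) (Iio t) t := fun w hw =>
    (hderiv t ht w hw).mono_of_mem_nhdsWithin <|
      mem_of_superset hleft fun s hs => ⟨hs.1, hs.2.le.trans ht.2⟩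
  have hnonneg : ∀ w ∈ K, 0 ≤ f t w := fun w hw =>
    ge_of_tendsto (hderiv_left w hw).continuousWithinAt <|
      hleft.mono fun s hs => (hpos s hs w hw).le
  have hzero : f t v = 0 := hle.antisymm (hnonneg v hv)
  have hderiv_nonpos : f' t v ≤ 0 := by
    refine le_of_tendsto ((hasDerivWithinAt_iff_tendsto_slope' self_notMem_Iio).1
      (hderiv_left v hv)) (hleft.mono fun s hs => ?_)
    rw [slope_def_field, hzero, sub_zero]
    exact div_nonpos_of_nonneg_of_nonpos (hpos s hs v hv).le (sub_nonpos.2 hs.2.le)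
  exact (htouch t ht v hv hnonneg hzero).not_ge hderiv_nonpos

end Touching

section ReForm

variable {𝕜 ι : Type*} [RCLike 𝕜] [Fintype ι]

/-- The real part of `vᴴ M v`, as a real-linear functional of `M`. The vector is taken in
`EuclideanSpace 𝕜 ι` so that the unit vectors form `Metric.sphere 0 1`. -/
noncomputable def reForm (v : EuclideanSpace 𝕜 ι) : Matrix ι ι 𝕜 →ₗ[ℝ] ℝ where
  toFun M := RCLike.re (star v.ofLp ⬝ᵥ M *ᵥ v.ofLp)
  map_add' M N := by simp only [add_mulVec, dotProduct_add, map_add]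
  map_smul' c M := by
    simp only [smul_mulVec, dotProduct_smul, RCLike.smul_re, RingHom.id_apply, smul_eq_mul]

lemma reForm_apply (v : EuclideanSpace 𝕜 ι) (M : Matrix ι ι 𝕜) :
    reForm v M = RCLike.re (star v.ofLp ⬝ᵥ M *ᵥ v.ofLp) := rfl

lemma reForm_one [DecidableEq ι] (v : EuclideanSpace 𝕜 ι) : reForm v 1 = ‖v‖ ^ 2 := by
  rw [reForm_apply, one_mulVec, dotProduct_comm, ← EuclideanSpace.inner_eq_star_dotProduct,
    ← norm_sq_eq_re_inner]

lemma reForm_smul_left (c : ℝ) (v : EuclideanSpace 𝕜 ι) (M : Matrix ι ι 𝕜) :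
    reForm (c • v) M = c ^ 2 * reForm v M := by
  simp only [reForm_apply, WithLp.ofLp_smul, star_smul, mulVec_smul, dotProduct_smul,
    smul_dotProduct, RCLike.smul_re, star_trivial]
  ring

lemma reForm_mul_of_mulVec_eq_smul {v : EuclideanSpace 𝕜 ι} {Z : Matrix ι ι 𝕜} {r : ℝ}
    (hZv : Z *ᵥ v.ofLp = r • v.ofLp) (C : Matrix ι ι 𝕜) :
    reForm v (C * Z) = r * reForm v C := by
  rw [reForm_apply, ← mulVec_mulVec, hZv, mulVec_smul, dotProduct_smul, RCLike.smul_re,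
    reForm_apply]

lemma reForm_mul_of_isHermitian_of_mulVec_eq_smul {v : EuclideanSpace 𝕜 ι} {Z : Matrix ι ι 𝕜}
    {r : ℝ} (hZ : Z.IsHermitian) (hZv : Z *ᵥ v.ofLp = r • v.ofLp) (B : Matrix ι ι 𝕜) :
    reForm v (Z * B) = r * reForm v B := by
  have hvZ : star v.ofLp ᵥ* Z = r • star v.ofLp := by
    rw [← hZ.eq, ← star_mulVec, hZv, star_smul, star_trivial]
  rw [reForm_apply, ← mulVec_mulVec, dotProduct_mulVec, hvZ, smul_dotProduct, RCLike.smul_re,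
    reForm_apply]

lemma continuous_reForm :
    Continuous fun p : Matrix ι ι 𝕜 × EuclideanSpace 𝕜 ι => reForm p.2 p.1 := by
  have hv : Continuous fun p : Matrix ι ι 𝕜 × EuclideanSpace 𝕜 ι => p.2.ofLp :=
    (PiLp.continuous_ofLp 2 _).comp continuous_snd
  exact RCLike.continuous_re.comp (hv.star.dotProduct (continuous_fst.matrix_mulVec hv))

lemma continuousOn_reForm {Z : ℝ → Matrix ι ι 𝕜} {s : Set ℝ} (hZ : ContinuousOn Z s)
    (K : Set (EuclideanSpace 𝕜 ι)) :
    ContinuousOn (fun p : ℝ × EuclideanSpace 𝕜 ι => reForm p.2 (Z p.1)) (s ×ˢ K) := by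
  refine continuous_reForm.comp_continuousOn
    (f := fun p : ℝ × EuclideanSpace 𝕜 ι => (Z p.1, p.2)) ?_
  exact (hZ.comp continuousOn_fst mapsTo_fst_prod).prodMk continuousOn_snd

lemma posSemidef_of_reForm_nonneg_on_sphere {M : Matrix ι ι 𝕜} (hM : M.IsHermitian)
    (h : ∀ v ∈ sphere (0 : EuclideanSpace 𝕜 ι) 1, 0 ≤ reForm v M) : M.PosSemidef := by
  have hnonneg (v : EuclideanSpace 𝕜 ι) : 0 ≤ reForm v M := by
    rcases eq_or_ne v 0 with rfl | hv
    · simp [reForm_apply]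
    have hunit : ‖v‖⁻¹ • v ∈ sphere (0 : EuclideanSpace 𝕜 ι) 1 := by
      simp [norm_smul, hv]
    have hscaled := h _ hunit
    rw [reForm_smul_left] at hscaled
    exact nonneg_of_mul_nonneg_right hscaled (by positivity)
  refine .of_dotProduct_mulVec_nonneg hM fun v => RCLike.nonneg_iff.2 ⟨?_, ?_⟩
  · exact hnonneg (WithLp.toLp 2 v)
  · exact hM.im_star_dotProduct_mulVec_self v

lemma mulVec_eq_smul_of_isMinOn_sphere {M : Matrix ι ι 𝕜} (hM : M.IsHermitian)
    {v : EuclideanSpace 𝕜 ι} (hv : v ∈ sphere 0 1)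
    (hmin : IsMinOn (reForm · M) (sphere 0 1) v) :
    M *ᵥ v.ofLp = reForm v M • v.ofLp := by
  classical
  set r := reForm v M
  have hshift : (M - r • (1 : Matrix ι ι 𝕜)).IsHermitian :=
    hM.sub (isHermitian_one.smul (IsSelfAdjoint.all r))
  have hform : ∀ w ∈ sphere (0 : EuclideanSpace 𝕜 ι) 1,
      reForm w (M - r • (1 : Matrix ι ι 𝕜)) = reForm w M - r := fun w hw => by
    rw [map_sub, map_smul, reForm_one, mem_sphere_zero_iff_norm.1 hw, one_pow, smul_eq_mul, mul_one]
  have hpsd : (M - r • (1 : Matrix ι ι 𝕜)).PosSemidef :=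
    posSemidef_of_reForm_nonneg_on_sphere hshift fun w hw => by
      rw [hform w hw]
      exact sub_nonneg.2 (isMinOn_iff.1 hmin w hw)
  have hnull : (M - r • (1 : Matrix ι ι 𝕜)) *ᵥ v.ofLp = 0 := by
    rw [← hpsd.dotProduct_mulVec_zero_iff]
    refine RCLike.ext ?_ (by simpa using hshift.im_star_dotProduct_mulVec_self v.ofLp)
    rw [← reForm_apply, hform v hv, sub_self, map_zero]
  rwa [sub_mulVec, smul_mulVec, one_mulVec, sub_eq_zero] at hnull

end ReForm

section Comparison

variable {𝕜 ι : Type*} [RCLike 𝕜] {s : Set ℝ} {a b t : ℝ}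

lemma continuousOn_of_hasDerivWithinAt_apply {Z Z' : ℝ → Matrix ι ι 𝕜}
    (hZ : ∀ t ∈ s, ∀ i j, HasDerivWithinAt (fun t => Z t i j) (Z' t i j) s t) :
    ContinuousOn Z s :=
  continuousOn_pi.2 fun i => continuousOn_pi.2 fun j t ht => (hZ t ht i j).continuousWithinAt

variable [Fintype ι]

lemma hasDerivWithinAt_reForm {Z : ℝ → Matrix ι ι 𝕜} {Z' : Matrix ι ι 𝕜}
    (hZ : ∀ i j, HasDerivWithinAt (fun t => Z t i j) (Z' i j) s t) (v : EuclideanSpace 𝕜 ι) :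
    HasDerivWithinAt (fun t => reForm v (Z t)) (reForm v Z') s t := by
  refine RCLike.reCLM.hasFDerivAt.comp_hasDerivWithinAt t
    (f := fun t => star v.ofLp ⬝ᵥ Z t *ᵥ v.ofLp) ?_
  exact .fun_sum fun i _ => .const_mul _ <| .fun_sum fun j _ => (hZ i j).mul_const _

lemma exists_forall_neg_lt_reForm {B : ℝ → Matrix ι ι 𝕜} (hB : ContinuousOn B (Icc a b)) :
    ∃ L : ℝ, ∀ t ∈ Icc a b, ∀ v ∈ sphere (0 : EuclideanSpace 𝕜 ι) 1, -L < reForm v (B t) := by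
  obtain ⟨c, hc⟩ := (isCompact_Icc.prod (isCompact_sphere 0 1)).exists_bound_of_continuousOn
    (continuousOn_reForm hB (sphere 0 1))
  exact ⟨c + 1, fun t ht v hv =>
    (neg_lt_neg (lt_add_one c)).trans_le (abs_le.1 (hc (t, v) ⟨ht, hv⟩)).1⟩

lemma reForm_add_exp_pos_of_linear_differential_inequality
    {Z Z' B C : ℝ → Matrix ι ι 𝕜} {L ε : ℝ}
    (hderiv : ∀ t ∈ Icc a b, ∀ i j, HasDerivWithinAt (fun t => Z t i j) (Z' t i j) (Icc a b) t)
    (hZ : ∀ t ∈ Icc a b, (Z t).IsHermitian)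
    (hL : ∀ t ∈ Icc a b, ∀ v ∈ sphere (0 : EuclideanSpace 𝕜 ι) 1, -L < reForm v (B t + C t))
    (ha : (Z a).PosSemidef)
    (hineq : ∀ t ∈ Icc a b, (Z' t + Z t * B t + C t * Z t).PosSemidef) (hε : 0 < ε) :
    ∀ t ∈ Icc a b, ∀ v ∈ sphere (0 : EuclideanSpace 𝕜 ι) 1,
      0 < reForm v (Z t) + ε * Real.exp (L * t) := by
  have hexp (t : ℝ) : HasDerivAt (fun t => ε * Real.exp (L * t)) (ε * Real.exp (L * t) * L) t := by
    simpa [mul_assoc] using (((hasDerivAt_id t).const_mul L).exp.const_mul ε)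
  refine pos_of_deriv_pos_of_touching (isCompact_sphere 0 1)
    (f' := fun t v => reForm v (Z' t) + ε * Real.exp (L * t) * L) ?_ ?_ ?_ ?_
  · exact (continuousOn_reForm (continuousOn_of_hasDerivWithinAt_apply hderiv) _).add (by fun_prop)
  · exact fun t ht v _ => (hasDerivWithinAt_reForm (hderiv t ht) v).add (hexp t).hasDerivWithinAt
  · exact fun v _ => add_pos_of_nonneg_of_pos (ha.re_dotProduct_nonneg v.ofLp) (by positivity)
  · intro t ht v hv hnonneg hzero
    set η := ε * Real.exp (L * t)
    have hη : 0 < η := by positivity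
    have hform : reForm v (Z t) = -η := eq_neg_of_add_eq_zero_left hzero
    have hmin : IsMinOn (reForm · (Z t)) (sphere 0 1) v := fun w hw => by
      simpa only [mem_ofPred_eq, hform] using neg_le_iff_add_nonneg.2 (hnonneg w hw)
    have hZv : Z t *ᵥ v.ofLp = (-η) • v.ofLp :=
      hform ▸ mulVec_eq_smul_of_isMinOn_sphere (hZ t ht) hv hmin
    have hineq_v : 0 ≤ reForm v (Z' t) - η * reForm v (B t + C t) := by
      calc 0 ≤ reForm v (Z' t + Z t * B t + C t * Z t) := (hineq t ht).re_dotProduct_nonneg v.ofLp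
        _ = reForm v (Z' t) - η * reForm v (B t + C t) := by
          rw [map_add, map_add, reForm_mul_of_isHermitian_of_mulVec_eq_smul (hZ t ht) hZv,
            reForm_mul_of_mulVec_eq_smul hZv, map_add]
          ring
    have hL_v : η * -L < η * reForm v (B t + C t) := mul_lt_mul_of_pos_left (hL t ht v hv) hη
    linarith

theorem posSemidef_of_linear_differential_inequality {Z Z' B C : ℝ → Matrix ι ι 𝕜}
    (hderiv : ∀ t ∈ Icc a b, ∀ i j, HasDerivWithinAt (fun t => Z t i j) (Z' t i j) (Icc a b) t)
    (hZ : ∀ t ∈ Icc a b, (Z t).IsHermitian)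
    (hB : ContinuousOn B (Icc a b)) (hC : ContinuousOn C (Icc a b))
    (ha : (Z a).PosSemidef)
    (hineq : ∀ t ∈ Icc a b, (Z' t + Z t * B t + C t * Z t).PosSemidef) :
    ∀ t ∈ Icc a b, (Z t).PosSemidef := by
  obtain ⟨L, hL⟩ := exists_forall_neg_lt_reForm (hB.add hC)
  refine fun t ht => posSemidef_of_reForm_nonneg_on_sphere (hZ t ht) fun v hv =>
    le_of_forall_pos_lt_add fun δ hδ => ?_
  simpa [div_mul_cancel₀] using reForm_add_exp_pos_of_linear_differential_inequality
    hderiv hZ hL ha hineq (ε := δ / Real.exp (L * t)) (by positivity) t ht v hv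

theorem riccati_comparison_s14 {X X' Y Y' P : ℝ → Matrix ι ι 𝕜}
    (hX : ∀ t ∈ Icc a b, ∀ i j, HasDerivWithinAt (fun t => X t i j) (X' t i j) (Icc a b) t)
    (hY : ∀ t ∈ Icc a b, ∀ i j, HasDerivWithinAt (fun t => Y t i j) (Y' t i j) (Icc a b) t)
    (hXherm : ∀ t ∈ Icc a b, (X t).IsHermitian) (hYherm : ∀ t ∈ Icc a b, (Y t).IsHermitian)
    (hP : ContinuousOn P (Icc a b)) (ha : (Y a - X a).PosSemidef)
    (hineq : ∀ t ∈ Icc a b,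
      ((Y' t + Y t * P t * Y t) - (X' t + X t * P t * X t)).PosSemidef) :
    ∀ t ∈ Icc a b, (Y t - X t).PosSemidef := by
  have hXcont : ContinuousOn X (Icc a b) := continuousOn_of_hasDerivWithinAt_apply hX
  have hYcont : ContinuousOn Y (Icc a b) := continuousOn_of_hasDerivWithinAt_apply hY
  refine posSemidef_of_linear_differential_inequality (Z := fun t => Y t - X t)
    (Z' := fun t => Y' t - X' t) (B := fun t => P t * Y t) (C := fun t => X t * P t)
    (fun t ht i j => (hY t ht i j).sub (hX t ht i j))
    (fun t ht => (hYherm t ht).sub (hXherm t ht)) (hP.mul hYcont) (hXcont.mul hP) ha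
    fun t ht => ?_
  convert hineq t ht using 1
  noncomm_ring

end Comparison

section Model

variable {𝕜 ι : Type*} [RCLike 𝕜] [DecidableEq ι]

lemma one_add_vecMulVec_single (i₀ : ι) :
    1 + vecMulVec (Pi.single i₀ 1) (star (Pi.single i₀ 1)) =
      diagonal fun j => if j = i₀ then (2 : 𝕜) else 1 := by
  ext i j
  simp only [Matrix.add_apply, one_apply, vecMulVec_apply, Pi.star_apply, Pi.single_apply,
    diagonal_apply]
  split_ifs <;> simp_all [one_add_one_eq_two]

variable [Fintype ι]

lemma sq_add_vecMulVec_mulVec_of_isHermitian {M : Matrix ι ι 𝕜} (hM : M.IsHermitian) (e : ι → 𝕜) :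
    M ^ 2 + vecMulVec (M *ᵥ e) (star (M *ᵥ e)) = M * (1 + vecMulVec e (star e)) * M := by
  rw [star_mulVec, hM.eq, ← mul_vecMulVec, ← vecMulVec_mul]
  noncomm_ring

lemma inv_smul_inv_riccati {P : Matrix ι ι 𝕜} (hP : IsUnit P) (t : ℝ) :
    -(t ^ 2)⁻¹ • P⁻¹ + (t⁻¹ • P⁻¹) * P * (t⁻¹ • P⁻¹) = 0 := by
  have hdet := (isUnit_iff_isUnit_det P).1 hP
  rw [smul_mul_assoc, nonsing_inv_mul P hdet, smul_mul_smul_comm, one_mul, ← sq, inv_pow,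
    neg_smul, neg_add_cancel]

lemma inv_smul_inv_one_add_vecMulVec_single (i₀ : ι) (t : ℝ) :
    t⁻¹ • (1 + vecMulVec (Pi.single i₀ 1) (star (Pi.single i₀ 1)))⁻¹ =
      diagonal fun j => if j = i₀ then ((1 / (2 * t) : ℝ) : 𝕜) else ((1 / t : ℝ) : 𝕜) := by
  have hinv : (diagonal fun j => if j = i₀ then (2 : 𝕜) else 1)⁻¹ =
      diagonal fun j => if j = i₀ then (2⁻¹ : 𝕜) else 1 := by
    refine inv_eq_left_inv ?_
    rw [diagonal_mul_diagonal, ← diagonal_one]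
    congr! 2 with j
    split_ifs <;> simp
  rw [one_add_vecMulVec_single, hinv, ← diagonal_smul]
  congr! 2 with j
  simp only [Pi.smul_apply, RCLike.real_smul_eq_coe_mul]
  split_ifs <;> simp [map_ofNat (algebraMap ℝ 𝕜), mul_comm]

end Model

theorem nearly_kahler_hessian_comparison_zero_general {𝕜 ι : Type*} [RCLike 𝕜] [Fintype ι]
    [DecidableEq ι] {T : ℝ} {X X' : ℝ → Matrix ι ι 𝕜} (e : ι → 𝕜)
    (hX : ∀ ρ ∈ Ioc 0 T, ∀ i j,
      HasDerivWithinAt (fun t => X t i j) (X' ρ i j) (Ioc 0 T) ρ)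
    (hHerm : ∀ ρ ∈ Ioc 0 T, (X ρ).IsHermitian)
    (hineq : ∀ ρ ∈ Ioc 0 T,
      (-(X' ρ + X ρ ^ 2 + vecMulVec (X ρ *ᵥ e) (star (X ρ *ᵥ e)))).PosSemidef)
    (hinit : ∃ᶠ ρ in 𝓝[>] 0, (ρ⁻¹ • (1 + vecMulVec e (star e))⁻¹ - X ρ).PosSemidef) :
    ∀ ρ ∈ Ioc 0 T, (ρ⁻¹ • (1 + vecMulVec e (star e))⁻¹ - X ρ).PosSemidef := by
  intro ρ hρ
  obtain ⟨ρ₀, hinit₀, hρ₀⟩ := (hinit.and_eventually (Ioc_mem_nhdsGT hρ.1)).exists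
  have hsub : Icc ρ₀ T ⊆ Ioc 0 T := fun t ht => ⟨hρ₀.1.trans_le ht.1, ht.2⟩
  set P : Matrix ι ι 𝕜 := 1 + vecMulVec e (star e) with hP_def
  have hP : P.PosDef := PosDef.one.add_posSemidef (posSemidef_vecMulVec_self_star e)
  refine riccati_comparison_s14 (P := fun _ => P) (Y := fun t => t⁻¹ • P⁻¹)
    (Y' := fun t => -(t ^ 2)⁻¹ • P⁻¹)
    (fun t ht i j => (hX t (hsub ht) i j).mono hsub)
    (fun t ht i j =>
      ((hasDerivAt_inv (hsub ht).1.ne').smul_const (P⁻¹ i j)).hasDerivWithinAt)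
    (fun t ht => hHerm t (hsub ht))
    (fun t _ => hP.inv.isHermitian.smul (IsSelfAdjoint.all t⁻¹))
    continuousOn_const hinit₀ (fun t ht => ?_) ρ ⟨hρ₀.2, hρ.2⟩
  rw [inv_smul_inv_riccati hP.isUnit, zero_sub, hP_def,
    ← sq_add_vecMulVec_mulVec_of_isHermitian (hHerm t (hsub ht)), ← add_assoc]
  exact hineq t (hsub ht)

/-- Analytic form of the nearly Kähler Hessian comparison for `K = 0`: if the Hermitian
`C¹` matrix-valued function `X` satisfies `X' + X² + (Xe₁)(Xe₁)ᴴ ≤ 0` on `(0, T]`, and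
`X ≤ Y` near `0` where `Y(ρ) = diag(1/(2ρ), 1/ρ, …, 1/ρ)`, then `X ρ ≤ Y ρ` for all
`ρ ∈ (0, T]`. -/
theorem nearly_kahler_hessian_comparison_zero (n : ℕ) (hn : 1 ≤ n)
    (T : ℝ) (hT : 0 < T)
    (X X' : ℝ → Matrix (Fin n) (Fin n) ℂ)
    (e₁ : Fin n → ℂ) (he₁ : e₁ = fun i : Fin n => if (i : ℕ) = 0 then (1 : ℂ) else 0)
    (Y : ℝ → Matrix (Fin n) (Fin n) ℂ)
    (hY : Y = fun ρ => Matrix.diagonal (fun j : Fin n =>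
      if (j : ℕ) = 0 then ((1 / (2 * ρ) : ℝ) : ℂ) else ((1 / ρ : ℝ) : ℂ)))
    (hX : ∀ ρ ∈ Set.Ioc 0 T, ∀ i j,
      HasDerivWithinAt (fun t => X t i j) (X' ρ i j) (Set.Ioc 0 T) ρ)
    (hX' : ∀ i j, ContinuousOn (fun ρ => X' ρ i j) (Set.Ioc 0 T))
    (hHerm : ∀ ρ ∈ Set.Ioc 0 T, (X ρ).IsHermitian)
    (hineq : ∀ ρ ∈ Set.Ioc 0 T,
      (-(X' ρ + X ρ ^ 2 + vecMulVec (X ρ *ᵥ e₁) (star (X ρ *ᵥ e₁)))).PosSemidef)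
    (hinit : ∃ ρ₀ ∈ Set.Ioc 0 T, ∀ ρ ∈ Set.Ioc 0 ρ₀, (Y ρ - X ρ).PosSemidef) :
    ∀ ρ ∈ Set.Ioc 0 T, (Y ρ - X ρ).PosSemidef := by
  have he₁_single : e₁ = Pi.single ⟨0, hn⟩ 1 := by
    ext i
    simp [he₁, Pi.single_apply, Fin.ext_iff]
  have hY_model (ρ : ℝ) : Y ρ = ρ⁻¹ • (1 + vecMulVec e₁ (star e₁))⁻¹ := by
    rw [he₁_single, inv_smul_inv_one_add_vecMulVec_single]
    simp only [hY, Fin.ext_iff, Complex.coe_algebraMap]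
  obtain ⟨ρ₀, hρ₀, hinit⟩ := hinit
  simp only [hY_model] at hinit ⊢
  refine nearly_kahler_hessian_comparison_zero_general e₁ hX hHerm hineq ?_
  exact (eventually_of_mem (Ioc_mem_nhdsGT hρ₀.1) hinit).frequently
end
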